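/- arXiv:2211.16402 — 12 statements merged into one kernel-verified Lean document; each statement's English description precedes it below -/
import Mathlib

section
/- For all n ≥ 3, all 0 ≤ k ≤ n, and every Boolean function f on the k-th slice of {0,1}^n, the deterministic query complexity satisfies D(f) ≤ n − 2. -/
/-- A deterministic decision tree querying variables indexed by `ι`. -/
inductive DTree (ι : Type) : Type where
  | leaf : Bool → DTree ι
  | node : ι → DTree ι → DTree ι → DTree ι

namespace DTree

/-- Evaluation of a decision tree on an input `x : ι → Bool`. -/
def eval {ι : Type} : DTree ι → (ι → Bool) → Bool
  | .leaf b, _ => b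
  | .node i t0 t1, x => if x i then eval t1 x else eval t0 x

/-- The number of queries made by a decision tree on an input. -/
def cost {ι : Type} : DTree ι → (ι → Bool) → ℕ
  | .leaf _, _ => 0
  | .node i t0 t1, x => 1 + (if x i then cost t1 x else cost t0 x)

end DTree

/-- `T` computes `f` on the domain `S`. -/
def Computes {ι : Type} (T : DTree ι) (S : Set (ι → Bool)) (f : (ι → Bool) → Bool) : Prop :=
  ∀ x ∈ S, T.eval x = f x

/-- Deterministic query complexity of `f` on the domain `S`: the least `d` such that some
decision tree computes `f` on `S` making at most `d` queries on every input in `S`. -/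
noncomputable def Dquery {ι : Type} (S : Set (ι → Bool)) (f : (ι → Bool) → Bool) : ℕ :=
  sInf {d | ∃ T : DTree ι, Computes T S f ∧ ∀ x ∈ S, T.cost x ≤ d}

/-- Hamming weight of `x : ι → Bool`. -/
def hamWeight {ι : Type} [Fintype ι] (x : ι → Bool) : ℕ :=
  (Finset.univ.filter fun i => x i = true).card

/-- The `k`-th cubeSlice: inputs of Hamming weight exactly `k`. -/
def cubeSlice (ι : Type) [Fintype ι] (k : ℕ) : Set (ι → Bool) :=
  {x | hamWeight x = k}

def DTree.lift {n : ℕ} : DTree (Fin n) → DTree (Fin (n+1))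
  | .leaf b => .leaf b
  | .node i t0 t1 => .node i.succ t0.lift t1.lift

theorem DTree.lift_eval {n : ℕ} (T : DTree (Fin n)) (x : Fin (n+1) → Bool) :
    T.lift.eval x = T.eval (fun i => x i.succ) := by
  induction T with
  | leaf b => rfl
  | node i t0 t1 h0 h1 => simp only [DTree.lift, DTree.eval, h0, h1]

theorem DTree.lift_cost {n : ℕ} (T : DTree (Fin n)) (x : Fin (n+1) → Bool) :
    T.lift.cost x = T.cost (fun i => x i.succ) := by
  induction T with
  | leaf b => rfl
  | node i t0 t1 h0 h1 => simp only [DTree.lift, DTree.cost, h0, h1]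

theorem hamWeight_succ {n : ℕ} (x : Fin (n+1) → Bool) :
    hamWeight x = (if x 0 = true then 1 else 0) + hamWeight (fun i : Fin n => x i.succ) := by
  unfold hamWeight
  simp only [Finset.card_filter, Fin.sum_univ_succ]

theorem base_one (a b c : Bool) : ∃ (i : Fin 3) (u v : Bool),
    (if i = 0 then v else u) = a ∧ (if i = 1 then v else u) = b ∧
    (if i = 2 then v else u) = c := by
  revert a b c; decide

theorem base3 (k : ℕ) (f : (Fin 3 → Bool) → Bool) :
    ∃ T : DTree (Fin 3), Computes T (cubeSlice (Fin 3) k) f ∧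
      ∀ x ∈ cubeSlice (Fin 3) k, T.cost x ≤ 1 := by
  have key : ∀ x : Fin 3 → Bool, x = ![x 0, x 1, x 2] := by decide
  have hw : ∀ x : Fin 3 → Bool, hamWeight x = (if x 0 = true then 1 else 0) +
      ((if x 1 = true then 1 else 0) + (if x 2 = true then 1 else 0)) := by
    intro x
    unfold hamWeight
    rw [Finset.card_filter, Fin.sum_univ_three, add_assoc]
  by_cases h1 : k = 1
  · obtain ⟨i, u, v, ha, hb, hc⟩ := base_one (f ![true, false, false])
      (f ![false, true, false]) (f ![false, false, true])
    refine ⟨.node i (.leaf u) (.leaf v), ?_, ?_⟩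
    · intro x hx
      have hx' : hamWeight x = k := hx
      rw [hw, h1] at hx'
      have hk := key x
      clear hx
      simp only [DTree.eval]
      generalize x 0 = p at *
      generalize x 1 = q at *
      generalize x 2 = r at *
      subst hk
      clear key hw
      fin_cases i <;> cases p <;> cases q <;> cases r <;> simp_all
    · intro x _
      simp [DTree.cost]
  by_cases h2 : k = 2
  · obtain ⟨i, u, v, ha, hb, hc⟩ := base_one (f ![false, true, true])
      (f ![true, false, true]) (f ![true, true, false])
    refine ⟨.node i (.leaf v) (.leaf u), ?_, ?_⟩
    · intro x hx
      have hx' : hamWeight x = k := hx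
      rw [hw, h2] at hx'
      have hk := key x
      clear hx
      simp only [DTree.eval]
      generalize x 0 = p at *
      generalize x 1 = q at *
      generalize x 2 = r at *
      subst hk
      clear key hw
      fin_cases i <;> cases p <;> cases q <;> cases r <;> simp_all
    · intro x _
      simp [DTree.cost]
  · refine ⟨.node 0 (.leaf (f ![false, false, false])) (.leaf (f ![true, true, true])), ?_, ?_⟩
    · intro x hx
      have hx' : hamWeight x = k := hx
      rw [hw] at hx'
      have hk := key x
      clear hx
      simp only [DTree.eval]
      generalize x 0 = p at *
      generalize x 1 = q at *
      generalize x 2 = r at *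
      subst hk
      clear key hw
      cases p <;> cases q <;> cases r <;> simp_all
    · intro x _
      simp [DTree.cost]

theorem exists_tree (m : ℕ) : ∀ (k : ℕ) (f : (Fin (m+3) → Bool) → Bool),
    ∃ T : DTree (Fin (m+3)), Computes T (cubeSlice (Fin (m+3)) k) f ∧
      ∀ x ∈ cubeSlice (Fin (m+3)) k, T.cost x ≤ m + 1 := by
  induction m with
  | zero => exact base3
  | succ m ih =>
    intro k f
    obtain ⟨T0, h0, c0⟩ := ih k (fun y => f (Fin.cons false y))
    obtain ⟨T1, h1, c1⟩ := ih (k-1) (fun y => f (Fin.cons true y))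
    have key : ∀ x : Fin (m+3+1) → Bool, Fin.cons (x 0) (fun i => x i.succ) = x :=
      fun x => Fin.cons_self_tail x
    have main : ∀ x ∈ cubeSlice (Fin (m+3+1)) k,
        (DTree.node (0 : Fin (m+3+1)) T0.lift T1.lift).eval x = f x ∧
        (DTree.node (0 : Fin (m+3+1)) T0.lift T1.lift).cost x ≤ m + 1 + 1 := by
      intro x hx
      have hx' : hamWeight x = k := hx
      rw [hamWeight_succ] at hx'
      have hk := key x
      clear hx
      simp only [DTree.eval, DTree.cost, DTree.lift_eval, DTree.lift_cost]
      cases hp : x 0 with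
      | false =>
        rw [hp] at hx' hk
        have hm : (fun i => x (Fin.succ i)) ∈ cubeSlice (Fin (m+3)) k := by
          show hamWeight _ = k
          simpa using hx'
        have e := h0 _ hm
        have c := c0 _ hm
        simp only [hk] at e
        simp only [Bool.false_eq_true, if_false]
        exact ⟨e, by omega⟩
      | true =>
        rw [hp] at hx' hk
        have hm : (fun i => x (Fin.succ i)) ∈ cubeSlice (Fin (m+3)) (k-1) := by
          show hamWeight _ = k - 1
          simp only [if_true] at hx'
          omega
        have e := h1 _ hm
        have c := c1 _ hm
        simp only [hk] at e
        simp only [if_true]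
        exact ⟨e, by omega⟩
    exact ⟨_, fun x hx => (main x hx).1, fun x hx => (main x hx).2⟩

/-- For `n ≥ 3` and `0 ≤ k ≤ n`, every Boolean function on the `k`-th slice of `{0,1}^n`
has deterministic query complexity at most `n - 2`. -/
theorem stmt1 (n k : ℕ) (hn : 3 ≤ n) (hk : k ≤ n) (f : (Fin n → Bool) → Bool) :
    Dquery (cubeSlice (Fin n) k) f ≤ n - 2 := by
  obtain ⟨m, rfl⟩ : ∃ m, n = m + 3 := ⟨n - 3, by omega⟩
  exact Nat.sInf_le (exists_tree m k f)
end

section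
/- For every Boolean function f on the weight-2 slice of {0,1}^n, D(f) ≥ n − m(G_f), where G_f is the graph on vertex set [n] whose edges are the pairs {i,j} with f({i,j}) = 1, and m(G_f) is the size of the largest clique or independent set of G_f. -/
/-- The input in the weight-2 slice whose 1-positions are `i` and `j`. -/
def pairInput {n : ℕ} (i j : Fin n) : Fin n → Bool :=
  fun t => decide (t = i ∨ t = j)

/-- `s` is monochromatic for the graph `G_f` associated to `f` on the weight-2 slice:
it is a clique or an independent set of `G_f`. -/
def IsMonoSet {n : ℕ} (f : (Fin n → Bool) → Bool) (s : Finset (Fin n)) : Prop :=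
  (∀ i ∈ s, ∀ j ∈ s, i ≠ j → f (pairInput i j) = true) ∨
    (∀ i ∈ s, ∀ j ∈ s, i ≠ j → f (pairInput i j) = false)

/-- `m(G_f)`: the size of the largest clique or independent set of `G_f`. -/
noncomputable def mG {n : ℕ} (f : (Fin n → Bool) → Bool) : ℕ :=
  sSup {m | ∃ s : Finset (Fin n), IsMonoSet f s ∧ s.card = m}

theorem exists_tree_aux {n : ℕ} (f : (Fin n → Bool) → Bool) (l : List (Fin n)) :
    ∀ y : Fin n → Bool, ∃ T : DTree (Fin n),
      (∀ x, (∀ i, i ∉ l → x i = y i) → T.eval x = f x) ∧ ∀ x, T.cost x ≤ l.length := by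
  induction l with
  | nil =>
    intro y
    refine ⟨.leaf (f y), ?_, ?_⟩
    · intro x hx
      have : x = y := funext fun i => hx i (by simp)
      simp [DTree.eval, this]
    · intro x
      simp [DTree.cost]
  | cons v l ih =>
    intro y
    obtain ⟨T0, h0, c0⟩ := ih (Function.update y v false)
    obtain ⟨T1, h1, c1⟩ := ih (Function.update y v true)
    refine ⟨.node v T0 T1, ?_, ?_⟩
    · intro x hx
      by_cases hv : x v = true
      · simp only [DTree.eval, hv, if_true]
        apply h1
        intro i hi
        by_cases h : i = v
        · subst h; simp [hv]
        · simp [h]; exact hx i (by simp [h, hi])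
      · simp only [DTree.eval, hv]
        apply h0
        intro i hi
        by_cases h : i = v
        · subst h; simpa using hv
        · simp [h]; exact hx i (by simp [h, hi])
    · intro x
      have := c0 x
      have := c1 x
      simp only [DTree.cost, List.length_cons]
      split <;> omega

theorem pairInput_comm' {n : ℕ} (i j : Fin n) : pairInput i j = pairInput j i := by
  funext t
  simp [pairInput, or_comm]

theorem mono_two {n : ℕ} (f : (Fin n → Bool) → Bool) (i j : Fin n) : IsMonoSet f {i, j} := by
  have hc := pairInput_comm' i j
  cases h : f (pairInput i j)
  · right
    intro a ha b hb hab
    simp only [Finset.mem_insert, Finset.mem_singleton] at ha hb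
    rcases ha with rfl | rfl <;> rcases hb with rfl | rfl <;> simp_all
  · left
    intro a ha b hb hab
    simp only [Finset.mem_insert, Finset.mem_singleton] at ha hb
    rcases ha with rfl | rfl <;> rcases hb with rfl | rfl <;> simp_all

theorem adversary {n : ℕ} (f : (Fin n → Bool) → Bool) (T : DTree (Fin n)) :
    ∀ R : Finset (Fin n), 2 ≤ R.card →
      (∀ i ∈ R, ∀ j ∈ R, i ≠ j → T.eval (pairInput i j) = f (pairInput i j)) →
      ∃ i ∈ R, ∃ j ∈ R, i ≠ j ∧ ∃ S, IsMonoSet f S ∧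
        R.card ≤ T.cost (pairInput i j) + S.card := by
  induction T with
  | leaf b =>
    intro R hR hT
    obtain ⟨i, hi, j, hj, hij⟩ := Finset.one_lt_card.1 hR
    refine ⟨i, hi, j, hj, hij, R, ?_, by omega⟩
    cases b
    · right
      intro i hi j hj hij
      exact (hT i hi j hj hij).symm
    · left
      intro i hi j hj hij
      exact (hT i hi j hj hij).symm
  | node v t0 t1 ih0 _ =>
    intro R hR hT
    by_cases h2 : R.card = 2
    · obtain ⟨i, j, hij, rfl⟩ := Finset.card_eq_two.1 h2
      exact ⟨i, by simp, j, by simp, hij, {i, j}, mono_two f i j, by omega⟩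
    · have key : ∀ i ∈ R.erase v, ∀ j ∈ R.erase v, pairInput i j v = false := by
        intro i hi j hj
        have := (Finset.mem_erase.1 hi).1
        have := (Finset.mem_erase.1 hj).1
        simp only [pairInput, decide_eq_false_iff_not]
        tauto
      have hc : R.card - 1 ≤ (R.erase v).card := Finset.pred_card_le_card_erase
      obtain ⟨i, hi, j, hj, hij, S, hS, hle⟩ := ih0 (R.erase v) (by omega) (by
        intro i hi j hj hij
        have := hT i (Finset.mem_of_mem_erase hi) j (Finset.mem_of_mem_erase hj) hij
        simpa [DTree.eval, key i hi j hj] using this)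
      refine ⟨i, Finset.mem_of_mem_erase hi, j, Finset.mem_of_mem_erase hj, hij, S, hS, ?_⟩
      simp only [DTree.cost, key i hi j hj]
      simp
      omega

theorem card_le_mG {n : ℕ} (f : (Fin n → Bool) → Bool) (s : Finset (Fin n))
    (hs : IsMonoSet f s) : s.card ≤ mG f := by
  refine le_csSup ⟨n, ?_⟩ ⟨s, hs, rfl⟩
  rintro m ⟨t, _, rfl⟩
  simpa using Finset.card_le_univ t

theorem pair_mem {n : ℕ} (i j : Fin n) (h : i ≠ j) :
    pairInput i j ∈ cubeSlice (Fin n) 2 := by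
  have : (Finset.univ.filter fun t => pairInput i j t = true) = {i, j} := by
    ext t; simp [pairInput]
  show hamWeight _ = 2
  rw [hamWeight, this, Finset.card_pair h]

/-- For every Boolean function `f` on the weight-2 slice of `{0,1}^n`,
`D(f) ≥ n - m(G_f)`. -/
theorem stmt2 (n : ℕ) (f : (Fin n → Bool) → Bool) :
    n - mG f ≤ Dquery (cubeSlice (Fin n) 2) f := by
  have hne : {d | ∃ T : DTree (Fin n), Computes T (cubeSlice (Fin n) 2) f ∧
      ∀ x ∈ cubeSlice (Fin n) 2, T.cost x ≤ d}.Nonempty := by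
    obtain ⟨T, h, c⟩ := exists_tree_aux f (Finset.univ : Finset (Fin n)).toList (fun _ => false)
    exact ⟨_, T, fun x _ => h x (by simp), fun x _ => c x⟩
  obtain ⟨T, hT, hc⟩ := Nat.sInf_mem hne
  change ∀ x ∈ cubeSlice (Fin n) 2, T.cost x ≤ Dquery (cubeSlice (Fin n) 2) f at hc
  by_cases hn : 2 ≤ n
  · obtain ⟨i, _, j, _, hij, S, hS, hle⟩ := adversary f T Finset.univ (by simpa using hn)
      (fun i _ j _ hij => hT _ (pair_mem i j hij))
    have h1 := hc _ (pair_mem i j hij)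
    have h2 := card_le_mG f S hS
    simp only [Finset.card_univ, Fintype.card_fin] at hle
    omega
  · have h := card_le_mG f Finset.univ (by
      left
      intro i _ j _ hij
      exact absurd (Fin.ext (by omega)) hij)
    simp only [Finset.card_univ, Fintype.card_fin] at h
    omega
end

section
/- For every Boolean function f on the weight-2 slice of {0,1}^n, D(f) ≤ n − m(G_f)/2, where G_f is the graph on vertex set [n] whose edges are the pairs {i,j} with f({i,j}) = 1, and m(G_f) is the size of the largest clique or independent set of G_f. -/
theorem queryList {ι : Type} [DecidableEq ι] (L : List ι) :
    ∀ F : (ι → Bool) → DTree ι,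
      (∀ x y : ι → Bool, (∀ i ∈ L, x i = y i) → F x = F y) →
      ∃ T : DTree ι, ∀ x, T.eval x = (F x).eval x ∧ T.cost x = L.length + (F x).cost x := by
  induction L with
  | nil =>
    intro F hF
    refine ⟨F (fun _ => false), fun x => ?_⟩
    rw [hF (fun _ => false) x (by simp)]
    simp
  | cons i L ih =>
    intro F hF
    have key : ∀ b : Bool, ∃ T : DTree ι, ∀ x, x i = b →
        T.eval x = (F x).eval x ∧ T.cost x = L.length + (F x).cost x := by
      intro b
      obtain ⟨T, hT⟩ := ih (fun x => F (Function.update x i b)) (by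
        intro x y hxy
        apply hF
        intro j hj
        by_cases hji : j = i
        · subst hji; simp
        · have : j ∈ L := by simpa [hji] using hj
          simp [hji, hxy j this])
      refine ⟨T, fun x hx => ?_⟩
      have := hT x
      rwa [← hx, Function.update_eq_self] at this
    obtain ⟨T0, h0⟩ := key false
    obtain ⟨T1, h1⟩ := key true
    refine ⟨.node i T0 T1, fun x => ?_⟩
    cases hx : x i
    · have := h0 x hx
      simp [DTree.eval, DTree.cost, hx, this.1, this.2]; omega
    · have := h1 x hx
      simp [DTree.eval, DTree.cost, hx, this.1, this.2]; omega

theorem second_phase {n : ℕ} (f : (Fin n → Bool) → Bool) (S : Finset (Fin n))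
    (hS : IsMonoSet f S) (x : Fin n → Bool) :
    ∃ T : DTree (Fin n), (∀ y, T.cost y ≤ S.card / 2) ∧
      ∀ y ∈ cubeSlice (Fin n) 2, (∀ i, i ∉ S → y i = x i) → T.eval y = f y := by
  classical
  set A : Finset (Fin n) := Finset.univ.filter (fun i => i ∉ S ∧ x i = true) with hA
  have sub : ∀ y : Fin n → Bool, (∀ i, i ∉ S → y i = x i) →
      A ⊆ Finset.univ.filter (fun i => y i = true) := by
    intro y hy i hi
    simp only [hA, Finset.mem_filter, Finset.mem_univ, true_and] at hi ⊢
    rw [hy i hi.1, hi.2]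
  rcases Nat.lt_or_ge A.card 2 with hc | hc
  · rcases Nat.lt_or_ge A.card 1 with hc0 | hc1
    · have hA0 : A = ∅ := by
        rw [← Finset.card_eq_zero]; omega
      have pair : ∀ y ∈ cubeSlice (Fin n) 2, (∀ i, i ∉ S → y i = x i) →
          ∃ a ∈ S, ∃ b ∈ S, a ≠ b ∧ y = pairInput a b := by
        intro y hy hyx
        obtain ⟨a, b, hab, he⟩ := Finset.card_eq_two.mp hy
        have hm : ∀ t, y t = true ↔ t = a ∨ t = b := by
          intro t
          have := Finset.ext_iff.mp he t
          simpa using this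
        have hin : ∀ t, y t = true → t ∈ S := by
          intro t ht
          by_contra hts
          have : t ∈ A := by
            simp only [hA, Finset.mem_filter, Finset.mem_univ, true_and]
            exact ⟨hts, by rw [← hyx t hts, ht]⟩
          simp [hA0] at this
        refine ⟨a, hin a ((hm a).2 (Or.inl rfl)), b, hin b ((hm b).2 (Or.inr rfl)), hab, ?_⟩
        funext t
        rw [Bool.eq_iff_iff, hm t]
        simp [pairInput]
      rcases hS with hS | hS
      · refine ⟨.leaf true, fun y => by simp [DTree.cost], fun y hy hyx => ?_⟩
        obtain ⟨a, ha, b, hb, hab, rfl⟩ := pair y hy hyx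
        simp [DTree.eval, hS a ha b hb hab]
      · refine ⟨.leaf false, fun y => by simp [DTree.cost], fun y hy hyx => ?_⟩
        obtain ⟨a, ha, b, hb, hab, rfl⟩ := pair y hy hyx
        simp [DTree.eval, hS a ha b hb hab]
    · obtain ⟨v, hv⟩ := Finset.card_eq_one.mp (show A.card = 1 by omega)
      have hvA : v ∈ A := by simp [hv]
      have hvS : v ∉ S := by
        simp only [hA, Finset.mem_filter, Finset.mem_univ, true_and] at hvA
        exact hvA.1
      have pair : ∀ y ∈ cubeSlice (Fin n) 2, (∀ i, i ∉ S → y i = x i) →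
          ∃ j ∈ S, y = pairInput v j := by
        intro y hy hyx
        have hvy : y v = true := by simpa using sub y hyx hvA
        have hcard : (Finset.univ.filter fun i => y i = true).card = 2 := hy
        obtain ⟨j, hj, hjv⟩ := Finset.exists_mem_ne (by rw [hcard]; norm_num) v
        have he : ({v, j} : Finset (Fin n)) = Finset.univ.filter fun i => y i = true := by
          apply Finset.eq_of_subset_of_card_le
          · intro t ht
            simp only [Finset.mem_insert, Finset.mem_singleton] at ht
            rcases ht with rfl | rfl
            · simpa using hvy
            · exact hj
          · rw [hcard, Finset.card_pair (Ne.symm hjv)]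
        refine ⟨j, ?_, ?_⟩
        · by_contra hjS
          have : j ∈ A := by
            simp only [hA, Finset.mem_filter, Finset.mem_univ, true_and]
            exact ⟨hjS, by rw [← hyx j hjS]; simpa using hj⟩
          rw [hv] at this
          exact hjv (by simpa using this)
        · funext t
          have := Finset.ext_iff.mp he t
          rw [Bool.eq_iff_iff]
          simp only [Finset.mem_insert, Finset.mem_singleton, Finset.mem_filter,
            Finset.mem_univ, true_and] at this
          simp [pairInput, this]
      have hb : ∃ b : Bool, (S.filter fun j => f (pairInput v j) = b).card ≤ S.card / 2 := by
        have h := Finset.card_filter_add_card_filter_not (s := S)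
          (fun j => f (pairInput v j) = true)
        simp only [Bool.not_eq_true] at h
        by_cases h1 : (S.filter fun j => f (pairInput v j) = true).card ≤ S.card / 2
        · exact ⟨true, h1⟩
        · exact ⟨false, by omega⟩
      obtain ⟨b, hb⟩ := hb
      set Q := S.filter fun j => f (pairInput v j) = b with hQ
      obtain ⟨T, hT⟩ := queryList Q.toList
        (fun z => .leaf (if ∃ j ∈ Q, z j = true then b else !b)) (by
          intro z w hzw
          have : (∃ j ∈ Q, z j = true) ↔ (∃ j ∈ Q, w j = true) := by
            constructor
            · rintro ⟨j, hj, h⟩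
              exact ⟨j, hj, by rw [← hzw j (by simpa using hj), h]⟩
            · rintro ⟨j, hj, h⟩
              exact ⟨j, hj, by rw [hzw j (by simpa using hj), h]⟩
          simp only [this])
      refine ⟨T, fun y => ?_, fun y hy hyx => ?_⟩
      · rw [(hT y).2]
        simpa [DTree.cost] using hb
      · rw [(hT y).1]
        obtain ⟨j, hj, rfl⟩ := pair y hy hyx
        simp only [DTree.eval]
        split_ifs with h
        · obtain ⟨k, hk, hkj⟩ := h
          have hk2 := Finset.mem_filter.mp hk
          simp only [pairInput, decide_eq_true_eq] at hkj
          rcases hkj with rfl | rfl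
          · exact absurd hk2.1 hvS
          · exact hk2.2.symm
        · have : f (pairInput v j) ≠ b := fun hf =>
            h ⟨j, Finset.mem_filter.mpr ⟨hj, hf⟩, by simp [pairInput]⟩
          revert this
          cases b <;> cases f (pairInput v j) <;> simp
  · refine ⟨.leaf (f fun i => decide (i ∈ A)), fun y => by simp [DTree.cost],
      fun y hy hyx => ?_⟩
    have hcard : (Finset.univ.filter fun i => y i = true).card = 2 := hy
    have he := Finset.eq_of_subset_of_card_le (sub y hyx) (by omega)
    have : (fun i => decide (i ∈ A)) = y := by
      funext t
      rw [he]; simp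
    simp only [DTree.eval, this]

theorem dquery_le {n : ℕ} (f : (Fin n → Bool) → Bool) (S : Finset (Fin n))
    (hS : IsMonoSet f S) :
    Dquery (cubeSlice (Fin n) 2) f ≤ (n - S.card) + S.card / 2 := by
  classical
  choose F hF1 hF2 using second_phase f S hS
  obtain ⟨T, hT⟩ := queryList (Sᶜ : Finset (Fin n)).toList
    (fun x => F (fun i => decide (i ∉ S) && x i)) (by
      intro x y hxy
      congr 1
      funext i
      by_cases hi : i ∈ S
      · simp [hi]
      · simp [hi, hxy i (by simpa using hi)])
  apply Nat.sInf_le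
  refine ⟨T, fun x hx => ?_, fun x hx => ?_⟩
  · rw [(hT x).1]
    exact hF2 _ x hx (fun i hi => by simp [hi])
  · rw [(hT x).2]
    have := hF1 (fun i => decide (i ∉ S) && x i) x
    simp only [Finset.length_toList, Finset.card_compl, Fintype.card_fin]
    omega

/-- For every Boolean function `f` on the weight-2 slice of `{0,1}^n`,
`D(f) ≤ n - m(G_f)/2`. -/
theorem stmt3 (n : ℕ) (f : (Fin n → Bool) → Bool) :
    (Dquery (cubeSlice (Fin n) 2) f : ℝ) ≤ (n : ℝ) - (mG f : ℝ) / 2 := by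
  have hmem : mG f ∈ {m | ∃ s : Finset (Fin n), IsMonoSet f s ∧ s.card = m} := by
    apply Nat.sSup_mem
    · exact ⟨0, ∅, Or.inl (by simp), by simp⟩
    · refine ⟨n, ?_⟩
      rintro m ⟨s, _, rfl⟩
      simpa using Finset.card_le_univ s
  obtain ⟨S, hS, hm⟩ := hmem
  have h := dquery_le f S hS
  have hle : S.card ≤ n := by simpa using Finset.card_le_univ S
  rw [hm] at h hle
  have h2 : 2 * Dquery (cubeSlice (Fin n) 2) f + mG f ≤ 2 * n := by omega
  have h3 : (2 * Dquery (cubeSlice (Fin n) 2) f + mG f : ℝ) ≤ 2 * n := by exact_mod_cast h2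
  linarith
end

section
/- The maximum deterministic query complexity over Boolean functions on the weight-2 slice of {0,1}^n is n − Θ(log n): for all sufficiently large n, there exists a function f on the weight-2 slice with D(f) ≥ n − 2 log₂ n, while every function f on the weight-2 slice satisfies D(f) ≤ n − (log₂ n)/4. -/
open Finset in
theorem ramsey_aux {α : Type} [DecidableEq α] (g : α → α → Bool) (hg : ∀ i j, g i j = g j i) :
    ∀ (m a b : ℕ), a + b = m → ∀ S : Finset α, 2 ^ m ≤ S.card →
      ∃ H ⊆ S, (a + 1 ≤ H.card ∧ ∀ i ∈ H, ∀ j ∈ H, i ≠ j → g i j = true) ∨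
        (b + 1 ≤ H.card ∧ ∀ i ∈ H, ∀ j ∈ H, i ≠ j → g i j = false) := by
  intro m
  induction m with
  | zero =>
    intro a b hab S hS
    obtain ⟨v, hv⟩ : S.Nonempty := Finset.card_pos.1 (by simpa using hS)
    refine ⟨{v}, by simpa using hv, Or.inl ⟨by simp; omega, ?_⟩⟩
    intro i hi j hj hij
    simp at hi hj
    exact absurd (hi.trans hj.symm) hij
  | succ m ih =>
    intro a b hab S hS
    have hp : 0 < 2 ^ m := by positivity
    rw [pow_succ] at hS
    obtain ⟨v, hv⟩ : S.Nonempty := Finset.card_pos.1 (by omega)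
    rcases Nat.eq_zero_or_pos a with ha | ha
    · refine ⟨{v}, by simpa using hv, Or.inl ⟨by simp; omega, ?_⟩⟩
      intro i hi j hj hij
      simp at hi hj
      exact absurd (hi.trans hj.symm) hij
    rcases Nat.eq_zero_or_pos b with hb | hb
    · refine ⟨{v}, by simpa using hv, Or.inr ⟨by simp; omega, ?_⟩⟩
      intro i hi j hj hij
      simp at hi hj
      exact absurd (hi.trans hj.symm) hij
    have hsum := Finset.card_filter_add_card_filter_not (s := S.erase v) (fun j => g v j = true)
    rw [Finset.card_erase_of_mem hv] at hsum
    have key : ∀ (c : Bool) (H : Finset α), H ⊆ (S.erase v).filter (fun j => g v j = c) →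
        (∀ i ∈ H, ∀ j ∈ H, i ≠ j → g i j = c) →
        insert v H ⊆ S ∧ (insert v H).card = H.card + 1 ∧
          ∀ i ∈ insert v H, ∀ j ∈ insert v H, i ≠ j → g i j = c := by
      intro c H hH hc
      have hH' : ∀ i ∈ H, i ≠ v ∧ i ∈ S ∧ g v i = c := by
        intro i hi
        have := hH hi
        simp at this
        tauto
      refine ⟨?_, ?_, ?_⟩
      · intro i hi
        rcases Finset.mem_insert.1 hi with rfl | hi
        · exact hv
        · exact (hH' i hi).2.1
      · exact Finset.card_insert_of_notMem (fun h => (hH' v h).1 rfl)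
      · intro i hi j hj hij
        rcases Finset.mem_insert.1 hi with rfl | hi <;> rcases Finset.mem_insert.1 hj with rfl | hj
        · exact absurd rfl hij
        · exact (hH' j hj).2.2
        · rw [hg]; exact (hH' i (by assumption)).2.2
        · exact hc i hi j hj hij
    by_cases hc : 2 ^ m ≤ ((S.erase v).filter (fun j => g v j = true)).card
    · obtain ⟨H, hHS, h | h⟩ := ih (a - 1) b (by omega) _ hc
      · obtain ⟨h1, h2, h3⟩ := key true H hHS h.2
        exact ⟨_, h1, Or.inl ⟨by omega, h3⟩⟩
      · exact ⟨H, fun i hi => Finset.mem_of_mem_erase (Finset.mem_filter.1 (hHS hi)).1, Or.inr h⟩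
    · have hc2 : 2 ^ m ≤ ((S.erase v).filter (fun j => g v j = false)).card := by
        simp only [Bool.not_eq_true] at hsum
        omega
      obtain ⟨H, hHS, h | h⟩ := ih a (b - 1) (by omega) _ hc2
      · exact ⟨H, fun i hi => Finset.mem_of_mem_erase (Finset.mem_filter.1 (hHS hi)).1, Or.inl h⟩
      · obtain ⟨h1, h2, h3⟩ := key false H hHS h.2
        exact ⟨_, h1, Or.inr ⟨by omega, h3⟩⟩

/-- The indicator of a pair. -/
def pairInd {n : ℕ} (i j : Fin n) : Fin n → Bool := fun t => decide (t = i ∨ t = j)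

theorem pairInd_comm {n : ℕ} (i j : Fin n) : pairInd i j = pairInd j i := by
  funext t; simp [pairInd, or_comm]

theorem pairInd_supp {n : ℕ} (i j : Fin n) :
    (Finset.univ.filter fun t => pairInd i j t = true) = {i, j} := by
  ext t; simp [pairInd]

theorem pairInd_mem {n : ℕ} {i j : Fin n} (h : i ≠ j) : pairInd i j ∈ cubeSlice (Fin n) 2 := by
  show hamWeight _ = 2
  unfold hamWeight
  rw [pairInd_supp, Finset.card_pair h]

theorem slice_eq {n : ℕ} {x : Fin n → Bool} (hx : x ∈ cubeSlice (Fin n) 2) :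
    ∃ i j, i ≠ j ∧ x = pairInd i j := by
  obtain ⟨i, j, hij, h⟩ := Finset.card_eq_two.1 (show hamWeight x = 2 from hx)
  refine ⟨i, j, hij, ?_⟩
  funext t
  have := Finset.ext_iff.1 h t
  simp at this
  rw [Bool.eq_iff_iff]
  simp [pairInd, this]

theorem slice_eq' {n : ℕ} {x : Fin n → Bool} (hx : x ∈ cubeSlice (Fin n) 2) {i : Fin n}
    (hi : x i = true) : ∃ j, i ≠ j ∧ x = pairInd i j := by
  obtain ⟨a, b, hab, rfl⟩ := slice_eq hx
  simp [pairInd] at hi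
  rcases hi with rfl | rfl
  · exact ⟨b, hab, rfl⟩
  · exact ⟨a, hab.symm, pairInd_comm _ _⟩

theorem query_all {ι : Type} [DecidableEq ι] (f : (ι → Bool) → Bool) (c : ℕ) (L : Finset ι) :
    ∀ S : Set (ι → Bool),
    (∀ y : ι → Bool, ∃ T : DTree ι, ∀ x ∈ S, (∀ i ∈ L, x i = y i) → T.eval x = f x ∧ T.cost x ≤ c) →
    ∃ T : DTree ι, ∀ x ∈ S, T.eval x = f x ∧ T.cost x ≤ L.card + c := by
  induction L using Finset.induction_on with
  | empty =>
    intro S h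
    obtain ⟨T, hT⟩ := h (fun _ => false)
    exact ⟨T, fun x hx => by simpa using hT x hx (by simp)⟩
  | insert i L hi ih =>
    intro S h
    have key : ∀ b : Bool, ∃ T : DTree ι, ∀ x ∈ {x | x ∈ S ∧ x i = b},
        T.eval x = f x ∧ T.cost x ≤ L.card + c := by
      intro b
      apply ih
      intro y
      obtain ⟨T, hT⟩ := h (Function.update y i b)
      refine ⟨T, fun x hx hy => hT x hx.1 ?_⟩
      intro j hj
      by_cases hji : j = i
      · subst hji; simpa using hx.2
      · rw [Function.update_of_ne hji]
        exact hy j (Finset.mem_of_mem_insert_of_ne hj hji)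
    obtain ⟨T0, h0⟩ := key false
    obtain ⟨T1, h1⟩ := key true
    refine ⟨.node i T0 T1, fun x hx => ?_⟩
    rw [Finset.card_insert_of_notMem hi]
    cases hxi : x i with
    | false =>
      obtain ⟨h2, h3⟩ := h0 x ⟨hx, hxi⟩
      simp [DTree.eval, DTree.cost, hxi, h2]; omega
    | true =>
      obtain ⟨h2, h3⟩ := h1 x ⟨hx, hxi⟩
      simp [DTree.eval, DTree.cost, hxi, h2]; omega

theorem query_const {ι : Type} [DecidableEq ι] (f : (ι → Bool) → Bool) (L : Finset ι)
    (S : Set (ι → Bool))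
    (h : ∀ x ∈ S, ∀ x' ∈ S, (∀ i ∈ L, x i = x' i) → f x = f x') :
    ∃ T : DTree ι, ∀ x ∈ S, T.eval x = f x ∧ T.cost x ≤ L.card := by
  refine query_all f 0 L S ?_
  intro y
  by_cases hy : ∃ z ∈ S, ∀ i ∈ L, z i = y i
  · obtain ⟨z, hz, hzy⟩ := hy
    refine ⟨.leaf (f z), fun x hx hxy => ⟨?_, le_rfl⟩⟩
    exact h z hz x hx (fun i hi => (hzy i hi).trans (hxy i hi).symm)
  · exact ⟨.leaf true, fun x hx hxy => absurd ⟨x, hx, hxy⟩ hy⟩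

theorem upper_tree {n : ℕ} (f : (Fin n → Bool) → Bool) (H : Finset (Fin n)) (c : Bool)
    (hH : ∀ i ∈ H, ∀ j ∈ H, i ≠ j → f (pairInd i j) = c) :
    ∃ T : DTree (Fin n), ∀ x ∈ cubeSlice (Fin n) 2,
      T.eval x = f x ∧ T.cost x ≤ Hᶜ.card + H.card / 2 := by
  apply query_all
  intro y
  suffices h : ∃ A : Finset (Fin n), A.card ≤ H.card / 2 ∧
      ∀ x ∈ {x | x ∈ cubeSlice (Fin n) 2 ∧ ∀ i ∈ Hᶜ, x i = y i},
      ∀ x' ∈ {x | x ∈ cubeSlice (Fin n) 2 ∧ ∀ i ∈ Hᶜ, x i = y i},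
      (∀ i ∈ A, x i = x' i) → f x = f x' by
    obtain ⟨A, hA, h⟩ := h
    obtain ⟨T, hT⟩ := query_const f A _ h
    exact ⟨T, fun x hx hxy => ⟨(hT x ⟨hx, hxy⟩).1, (hT x ⟨hx, hxy⟩).2.trans hA⟩⟩
  by_cases h1 : ∃ i, i ∉ H ∧ y i = true
  · obtain ⟨i, hiH, hyi⟩ := h1
    have hxi : ∀ x : Fin n → Bool, (∀ i ∈ Hᶜ, x i = y i) → x i = true := fun x hx => by
      rw [hx i (by simpa using hiH), hyi]
    by_cases h2 : ∃ i', i' ≠ i ∧ i' ∉ H ∧ y i' = true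
    · obtain ⟨i', hne, hiH', hyi'⟩ := h2
      refine ⟨∅, by simp, ?_⟩
      have hu : ∀ x ∈ cubeSlice (Fin n) 2, (∀ i ∈ Hᶜ, x i = y i) → x = pairInd i i' := by
        intro x hx hxy
        obtain ⟨j, hij, rfl⟩ := slice_eq' hx (hxi x hxy)
        have := hxy i' (by simpa using hiH')
        rw [hyi'] at this
        simp [pairInd, hne] at this
        rw [this]
      rintro x ⟨hx, hxy⟩ x' ⟨hx', hxy'⟩ -
      rw [hu x hx hxy, hu x' hx' hxy']
    · push Not at h2
      have hu : ∀ x ∈ cubeSlice (Fin n) 2, (∀ i ∈ Hᶜ, x i = y i) →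
          ∃ j ∈ H, i ≠ j ∧ x = pairInd i j := by
        intro x hx hxy
        obtain ⟨j, hij, rfl⟩ := slice_eq' hx (hxi x hxy)
        refine ⟨j, ?_, hij, rfl⟩
        by_contra hj
        apply h2 j hij.symm hj
        rw [← hxy j (by simpa using hj)]
        simp [pairInd]
      have hsum := Finset.card_filter_add_card_filter_not (s := H)
        (fun j => f (pairInd i j) = true)
      simp only [Bool.not_eq_true] at hsum
      obtain ⟨b, hb⟩ : ∃ b : Bool, (H.filter (fun j => f (pairInd i j) = b)).card ≤ H.card / 2 := by
        by_cases hc : (H.filter (fun j => f (pairInd i j) = true)).card ≤ H.card / 2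
        · exact ⟨true, hc⟩
        · exact ⟨false, by omega⟩
      refine ⟨_, hb, ?_⟩
      rintro x ⟨hx, hxy⟩ x' ⟨hx', hxy'⟩ hA
      obtain ⟨j, hj, hij, rfl⟩ := hu x hx hxy
      obtain ⟨j', hj', hij', rfl⟩ := hu x' hx' hxy'
      by_cases e1 : f (pairInd i j) = b
      · have := hA j (by simp [hj, e1])
        simp [pairInd, hij.symm] at this
        rw [this]
      · by_cases e2 : f (pairInd i j') = b
        · have := hA j' (by simp [hj', e2])
          simp [pairInd, hij'.symm] at this
          rw [this]
        · revert e1 e2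
          cases f (pairInd i j) <;> cases f (pairInd i j') <;> cases b <;> simp
  · push Not at h1
    refine ⟨∅, by simp, ?_⟩
    have hu : ∀ x ∈ cubeSlice (Fin n) 2, (∀ i ∈ Hᶜ, x i = y i) → f x = c := by
      intro x hx hxy
      obtain ⟨a, b, hab, rfl⟩ := slice_eq hx
      apply hH _ _ _ _ hab
      · by_contra ha
        apply h1 a ha
        rw [← hxy a (by simpa using ha)]
        simp [pairInd]
      · by_contra ha
        apply h1 b ha
        rw [← hxy b (by simpa using ha)]
        simp [pairInd]
    rintro x ⟨hx, hxy⟩ x' ⟨hx', hxy'⟩ -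
    rw [hu x hx hxy, hu x' hx' hxy']

theorem lower_tree {n : ℕ} (k : ℕ) (hk : 2 ≤ k) (T : DTree (Fin n)) :
    ∀ (d : ℕ) (R : Finset (Fin n)), d + k ≤ R.card →
      (∀ i ∈ R, ∀ j ∈ R, i ≠ j → T.cost (pairInd i j) ≤ d) →
      ∃ U ⊆ R, k ≤ U.card ∧ ∃ b, ∀ i ∈ U, ∀ j ∈ U, i ≠ j → T.eval (pairInd i j) = b := by
  induction T with
  | leaf b =>
    intro d R hR _
    exact ⟨R, subset_rfl, by omega, b, fun _ _ _ _ _ => rfl⟩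
  | node t T0 T1 ih0 _ =>
    intro d R hR hc
    obtain ⟨a, ha, b, hb, hab⟩ := Finset.one_lt_card.1 (show 1 < R.card by omega)
    have hd : 1 ≤ d := by
      have := hc a ha b hb hab
      simp only [DTree.cost] at this
      omega
    have hz : ∀ i ∈ R.erase t, ∀ j ∈ R.erase t, pairInd i j t = false := by
      intro i hi j hj
      simp [pairInd, (Finset.ne_of_mem_erase hi).symm, (Finset.ne_of_mem_erase hj).symm]
    obtain ⟨U, hU, hkU, c, hcU⟩ := ih0 (d - 1) (R.erase t)
      (by have := Finset.pred_card_le_card_erase (s := R) (a := t); omega) (by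
        intro i hi j hj hij
        have := hc i (Finset.mem_of_mem_erase hi) j (Finset.mem_of_mem_erase hj) hij
        simp [DTree.cost, hz i hi j hj] at this
        omega)
    refine ⟨U, hU.trans (Finset.erase_subset _ _), hkU, c, ?_⟩
    intro i hi j hj hij
    simp [DTree.eval, hz i (hU hi) j (hU hj), hcU i hi j hj hij]

theorem count_const {α : Type} [Fintype α] [DecidableEq α] (s : Finset α) (b : Bool) :
    (Finset.univ.filter fun F : α → Bool => ∀ a ∈ s, F a = b).card * 2 ^ s.card
      = 2 ^ Fintype.card α := by
  have : (Finset.univ.filter fun F : α → Bool => ∀ a ∈ s, F a = b)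
      = Fintype.piFinset (fun a => if a ∈ s then {b} else Finset.univ) := by
    ext F
    simp only [Finset.mem_filter, Finset.mem_univ, true_and, Fintype.mem_piFinset]
    refine forall_congr' fun a => ?_
    by_cases h : a ∈ s <;> simp [h]
  rw [this, Fintype.card_piFinset]
  have h2 : ∀ a, (if a ∈ s then ({b} : Finset Bool) else Finset.univ).card
      = if a ∈ s then 1 else 2 := by
    intro a; split_ifs <;> simp
  simp only [h2]
  rw [Finset.prod_ite]
  simp only [Finset.prod_const, one_pow, one_mul]
  rw [← pow_add, ← Finset.compl_filter, Finset.filter_mem_eq_inter, Finset.univ_inter,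
    Finset.card_compl_add_card]

theorem propB {α : Type} [Fintype α] [DecidableEq α] (𝒜 : Finset (Finset α)) (m : ℕ)
    (hm : ∀ A ∈ 𝒜, A.card = m) (hc : 𝒜.card * 2 < 2 ^ m) :
    ∃ F : α → Bool, ∀ A ∈ 𝒜, ∀ b : Bool, ¬ ∀ a ∈ A, F a = b := by
  by_contra hcon
  push Not at hcon
  have hcov : (Finset.univ : Finset (α → Bool)) ⊆ (𝒜 ×ˢ (Finset.univ : Finset Bool)).biUnion
      (fun p => Finset.univ.filter fun F : α → Bool => ∀ a ∈ p.1, F a = p.2) := by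
    intro F _
    obtain ⟨A, hA, b, hb⟩ := hcon F
    exact Finset.mem_biUnion.2 ⟨(A, b), by simpa using hA, by simpa using hb⟩
  have h1 := (Finset.card_le_card hcov).trans Finset.card_biUnion_le
  have h2 := Nat.mul_le_mul_right (2 ^ m) h1
  rw [Finset.sum_mul, Finset.sum_congr rfl (g := fun _ => 2 ^ Fintype.card α)] at h2
  · simp at h2
    have : 0 < 2 ^ Fintype.card α := by positivity
    nlinarith
  · rintro ⟨A, b⟩ hp
    have := (Finset.mem_product.1 hp).1
    have h3 := count_const A b
    rwa [hm A this] at h3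

theorem fact_bound (k : ℕ) (hk : 3 ≤ k) : 2 ^ (k + 2) < k.factorial ^ 2 := by
  induction k, hk using Nat.le_induction with
  | base => decide
  | succ k hk ih =>
    rw [Nat.factorial_succ, mul_pow, show k + 1 + 2 = k + 2 + 1 by ring, pow_succ]
    have h4 : 2 ≤ (k + 1) ^ 2 := by nlinarith
    have h5 := Nat.mul_le_mul_right (k.factorial ^ 2) h4
    omega

theorem choose_bound (n k : ℕ) (hk : 3 ≤ k) (h : n ^ 2 ≤ 2 ^ k) :
    n.choose k * 2 < 2 ^ (k.choose 2) := by
  have h1 : k.factorial * n.choose k ≤ n ^ k := by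
    rw [← Nat.descFactorial_eq_factorial_mul_choose]; exact Nat.descFactorial_le_pow n k
  have h2 := fact_bound k hk
  have h3 : (n ^ 2) ^ k ≤ (2 ^ k) ^ k := Nat.pow_le_pow_left h k
  have h4 : k.choose 2 * 2 + k = k * k := by
    rw [Nat.choose_two_right, Nat.div_mul_cancel (Nat.even_mul_pred_self k).two_dvd]
    obtain ⟨j, rfl⟩ : ∃ j, k = j + 1 := ⟨k - 1, by omega⟩
    simp; ring
  rw [← pow_mul 2 k k, ← h4, pow_add, pow_mul 2 _ 2] at h3
  rw [pow_add] at h2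
  have h5 : (k.factorial * n.choose k) ^ 2 ≤ (n ^ 2) ^ k := by
    rw [← pow_mul, mul_comm 2 k, pow_mul]; exact Nat.pow_le_pow_left h1 2
  have h6 : 0 < 2 ^ k.choose 2 := by positivity
  by_contra hcon
  push Not at hcon
  have h7 : (2 ^ k.choose 2) ^ 2 ≤ (n.choose k * 2) ^ 2 := Nat.pow_le_pow_left hcon 2
  have h8 : (2 ^ k.choose 2) ^ 2 * (2 ^ k * 2 ^ 2) < (2 ^ k.choose 2) ^ 2 * k.factorial ^ 2 :=
    Nat.mul_lt_mul_of_pos_left h2 (by positivity)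
  have h9 := Nat.mul_le_mul_right (k.factorial ^ 2) h7
  have h10 := h5.trans h3
  rw [mul_pow] at h10 h9
  nlinarith

theorem exists_hard (n k : ℕ) (hk : 3 ≤ k) (h : n ^ 2 ≤ 2 ^ k) :
    ∃ f : (Fin n → Bool) → Bool, ∀ U : Finset (Fin n), k ≤ U.card → ∀ b : Bool,
      ¬ ∀ i ∈ U, ∀ j ∈ U, i ≠ j → f (pairInd i j) = b := by
  obtain ⟨F, hF⟩ := propB (((Finset.univ : Finset (Fin n)).powersetCard k).image
    (fun U => U.powersetCard 2)) (k.choose 2) (by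
      intro A hA
      obtain ⟨U, hU, rfl⟩ := Finset.mem_image.1 hA
      rw [Finset.card_powersetCard, (Finset.mem_powersetCard.1 hU).2]) (by
      refine lt_of_le_of_lt (Nat.mul_le_mul_right 2 Finset.card_image_le) ?_
      simpa using choose_bound n k hk h)
  refine ⟨fun x => F (Finset.univ.filter fun t => x t = true), ?_⟩
  intro U hU b hb
  obtain ⟨V, hVU, hV⟩ := Finset.exists_subset_card_eq hU
  refine hF (V.powersetCard 2) (Finset.mem_image.2 ⟨V, by simp [hV], rfl⟩) b ?_
  intro a ha
  obtain ⟨haV, ha2⟩ := Finset.mem_powersetCard.1 ha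
  obtain ⟨i, j, hij, rfl⟩ := Finset.card_eq_two.1 ha2
  have := hb i (hVU (haV (by simp))) j (hVU (haV (by simp))) hij
  simpa only [pairInd_supp] using this

theorem dquery_spec {n : ℕ} (f : (Fin n → Bool) → Bool) :
    ∃ T : DTree (Fin n), Computes T (cubeSlice (Fin n) 2) f ∧
      ∀ x ∈ cubeSlice (Fin n) 2, T.cost x ≤ Dquery (cubeSlice (Fin n) 2) f := by
  obtain ⟨T, hT⟩ := upper_tree f ∅ true (by simp)
  exact Nat.sInf_mem (s := {d | ∃ T : DTree (Fin n), Computes T (cubeSlice (Fin n) 2) f ∧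
      ∀ x ∈ cubeSlice (Fin n) 2, T.cost x ≤ d})
    ⟨_, T, fun x hx => (hT x hx).1, fun x hx => (hT x hx).2⟩

theorem upper_final {n : ℕ} (hn : 3 ≤ n) (f : (Fin n → Bool) → Bool) :
    (Dquery (cubeSlice (Fin n) 2) f : ℝ) ≤ (n : ℝ) - Real.logb 2 n / 4 := by
  set m := Nat.log 4 n with hm
  have hm1 : 4 ^ m ≤ n := Nat.pow_log_le_self 4 (by omega)
  have hm2 : n < 4 ^ (m + 1) := Nat.lt_pow_succ_log_self (by norm_num) n
  obtain ⟨H, -, hH⟩ := ramsey_aux (fun i j => f (pairInd i j))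
    (fun i j => by rw [pairInd_comm]) (m + m) m m rfl (Finset.univ : Finset (Fin n)) (by
      rw [← two_mul, pow_mul]; simpa using hm1)
  obtain ⟨c, hcard, hc⟩ : ∃ c, m + 1 ≤ H.card ∧
      ∀ i ∈ H, ∀ j ∈ H, i ≠ j → f (pairInd i j) = c := by
    rcases hH with h | h
    · exact ⟨true, h⟩
    · exact ⟨false, h⟩
  obtain ⟨T, hT⟩ := upper_tree f H c hc
  have hD : Dquery (cubeSlice (Fin n) 2) f ≤ Hᶜ.card + H.card / 2 :=
    Nat.sInf_le ⟨T, fun x hx => (hT x hx).1, fun x hx => (hT x hx).2⟩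
  have hsum := Finset.card_compl_add_card H
  rw [Fintype.card_fin] at hsum
  have h2 : 2 * Dquery (cubeSlice (Fin n) 2) f + (m + 1) ≤ 2 * n := by omega
  have h3 : (2 * Dquery (cubeSlice (Fin n) 2) f + (m + 1) : ℝ) ≤ 2 * n := by exact_mod_cast h2
  have hlog : Real.logb 2 n ≤ 2 * (m + 1) := by
    rw [Real.logb_le_iff_le_rpow (by norm_num) (by positivity)]
    have : (n : ℝ) ≤ 4 ^ (m + 1) := by exact_mod_cast hm2.le
    refine this.trans (le_of_eq ?_)
    rw [show (2 * ((m : ℝ) + 1)) = ((2 * (m + 1) : ℕ) : ℝ) by push_cast; ring,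
      Real.rpow_natCast, pow_mul]
    norm_num
  linarith

theorem lower_final {n : ℕ} (hn : 3 ≤ n) : ∃ f : (Fin n → Bool) → Bool,
      (n : ℝ) - 2 * Real.logb 2 n ≤ (Dquery (cubeSlice (Fin n) 2) f : ℝ) := by
  set k := Nat.clog 2 (n ^ 2) with hkdef
  have hk1 : n ^ 2 ≤ 2 ^ k := Nat.le_pow_clog (by norm_num) _
  have hk3 : 3 ≤ k := by
    by_contra hlt
    have : 2 ^ k ≤ 2 ^ 2 := Nat.pow_le_pow_right (by norm_num) (by omega)
    nlinarith
  obtain ⟨f, hf⟩ := exists_hard n k hk3 hk1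
  refine ⟨f, ?_⟩
  by_contra hcon
  push Not at hcon
  obtain ⟨T, hT, hcost⟩ := dquery_spec f
  set d := Dquery (cubeSlice (Fin n) 2) f with hd
  have hlogpos : 0 ≤ Real.logb 2 n := Real.logb_nonneg (by norm_num) (by
    have : (3 : ℝ) ≤ n := by exact_mod_cast hn
    linarith)
  have hdn : d ≤ n := by
    have : (d : ℝ) ≤ n := by linarith
    exact_mod_cast this
  have hk : k ≤ n - d := by
    apply Nat.clog_le_of_le_pow
    have h1 : Real.logb 2 ((n : ℝ) ^ 2) ≤ ((n - d : ℕ) : ℝ) := by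
      rw [Real.logb_pow]
      push_cast [hdn]
      linarith
    rw [Real.logb_le_iff_le_rpow (by norm_num) (by positivity), Real.rpow_natCast] at h1
    exact_mod_cast h1
  obtain ⟨U, -, hU, b, hb⟩ := lower_tree k (by omega) T d Finset.univ (by simp; omega)
    (fun i _ j _ hij => hcost _ (pairInd_mem hij))
  exact hf U hU b (fun i hi j hj hij => by
    rw [← hT _ (pairInd_mem hij)]; exact hb i hi j hj hij)

/-- The maximum deterministic query complexity on the weight-2 slice is `n - Θ(log n)`:
for all sufficiently large `n`, some function requires `n - 2 log₂ n` queries, while every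
function can be computed with `n - (log₂ n)/4` queries. -/
theorem stmt4 : ∃ N : ℕ, ∀ n : ℕ, N ≤ n →
    (∃ f : (Fin n → Bool) → Bool,
      (n : ℝ) - 2 * Real.logb 2 n ≤ (Dquery (cubeSlice (Fin n) 2) f : ℝ)) ∧
    (∀ f : (Fin n → Bool) → Bool,
      (Dquery (cubeSlice (Fin n) 2) f : ℝ) ≤ (n : ℝ) - Real.logb 2 n / 4) :=
  ⟨3, fun _ hn => ⟨lower_final hn, fun f => upper_final hn f⟩⟩
end

section
/- Let k ≥ 1 and let EQ be the equality function on the balanced slice of {0,1}^{4k}, defined on pairs (x,y) with x, y ∈ {0,1}^{2k} and |x| + |y| = 2k by EQ(x,y) = 1 if and only if x = y. Then D(EQ) = 3k − 1. -/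
/-- The equality function on `{0,1}^{4k}`: on input `(x, y)` with `x, y ∈ {0,1}^{2k}`
(the first and last `2k` bits), it outputs `1` iff `x = y`. -/
def EQfun (k : ℕ) (z : Fin (4 * k) → Bool) : Bool :=
  decide (∀ i : Fin (2 * k),
    z ⟨i.1, by omega⟩ = z ⟨2 * k + i.1, by omega⟩)

namespace EQSlice

open Finset

/-- coordinates queried -/
def queried {ι : Type} [DecidableEq ι] : DTree ι → (ι → Bool) → Finset ι
  | .leaf _, _ => ∅
  | .node i t0 t1, x => insert i (if x i then queried t1 x else queried t0 x)

lemma queried_card {ι : Type} [DecidableEq ι] (T : DTree ι) (x : ι → Bool) :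
    (queried T x).card ≤ T.cost x := by
  induction T with
  | leaf b => simp [queried, DTree.cost]
  | node i t0 t1 h0 h1 =>
    simp only [queried, DTree.cost]
    refine (card_insert_le _ _).trans ?_
    split_ifs <;> omega

lemma eval_congr {ι : Type} [DecidableEq ι] (T : DTree ι) (x y : ι → Bool)
    (h : ∀ i ∈ queried T x, x i = y i) : T.eval x = T.eval y := by
  induction T with
  | leaf b => simp [DTree.eval]
  | node i t0 t1 h0 h1 =>
    simp only [queried, mem_insert, forall_eq_or_imp] at h
    obtain ⟨hi, h⟩ := h
    simp only [DTree.eval, ← hi]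
    by_cases hx : x i = true
    · simp only [hx, if_true] at h ⊢
      exact h1 h
    · simp only [hx] at h ⊢
      exact h0 h

/-- read a list of coordinates -/
def readAll {ι : Type} [DecidableEq ι] :
    List ι → (ι → Bool) → ((ι → Bool) → DTree ι) → DTree ι
  | [], s, g => g s
  | i :: l, s, g => .node i (readAll l (Function.update s i false) g)
      (readAll l (Function.update s i true) g)

lemma readAll_spec {ι : Type} [DecidableEq ι] (l : List ι) (s : ι → Bool)
    (g : (ι → Bool) → DTree ι) (x : ι → Bool) :
    (readAll l s g).eval x = (g (fun i => if i ∈ l then x i else s i)).eval x ∧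
    (readAll l s g).cost x = l.length + (g (fun i => if i ∈ l then x i else s i)).cost x := by
  induction l generalizing s with
  | nil => simp [readAll]
  | cons i l ih =>
    have key : ∀ b, x i = b → (fun j => if j ∈ l then x j else Function.update s i b j)
        = (fun j => if j ∈ i :: l then x j else s j) := by
      intro b hb
      funext j
      by_cases hj : j ∈ l
      · simp [hj]
      · by_cases hji : j = i
        · subst hji; simp [hj, hb]
        · simp [hj, hji]
    rcases hx : x i with _ | _
    · have := ih (Function.update s i false)
      rw [key _ hx] at this
      simp only [readAll, DTree.eval, DTree.cost, hx, List.length_cons]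
      refine ⟨by simpa using this.1, ?_⟩
      have := this.2
      simp only [Bool.false_eq_true, if_false]
      omega
    · have := ih (Function.update s i true)
      rw [key _ hx] at this
      simp only [readAll, DTree.eval, DTree.cost, hx, List.length_cons]
      refine ⟨by simpa using this.1, ?_⟩
      have := this.2
      simp only [if_true]
      omega

def lo (k : ℕ) (i : Fin (2 * k)) : Fin (4 * k) := ⟨i.1, by omega⟩
def hi (k : ℕ) (i : Fin (2 * k)) : Fin (4 * k) := ⟨2 * k + i.1, by omega⟩
def pr (k : ℕ) (i : Fin (4 * k)) : Fin (2 * k) :=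
  if h : i.1 < 2 * k then ⟨i.1, h⟩ else ⟨i.1 - 2 * k, by omega⟩

lemma pr_lo (k) (i : Fin (2 * k)) : pr k (lo k i) = i := by
  simp [pr, lo]
lemma pr_hi (k) (i : Fin (2 * k)) : pr k (hi k i) = i := by
  simp [pr, hi]
lemma lo_inj (k) : Function.Injective (lo k) := fun a b h => by
  rw [← pr_lo k a, h, pr_lo]
lemma hi_inj (k) : Function.Injective (hi k) := fun a b h => by
  rw [← pr_hi k a, h, pr_hi]
lemma lo_ne_hi (k) (i j : Fin (2 * k)) : lo k i ≠ hi k j := by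
  simp only [lo, hi, ne_eq, Fin.mk.injEq]; omega
lemma lo_or_hi (k) (i : Fin (4 * k)) : i = lo k (pr k i) ∨ i = hi k (pr k i) := by
  by_cases h : i.1 < 2 * k
  · left; ext; simp [lo, pr, h]
  · right; ext; simp only [hi, pr, h, dite_false]; omega

lemma EQ_iff (k) (z : Fin (4 * k) → Bool) :
    EQfun k z = true ↔ ∀ i, z (lo k i) = z (hi k i) := by
  unfold EQfun lo hi
  exact decide_eq_true_iff

lemma card_F (k) (C : Finset (Fin (2 * k))) :
    (univ.filter fun i => pr k i ∈ C).card = 2 * C.card := by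
  have : (univ.filter fun i => pr k i ∈ C) = C.image (lo k) ∪ C.image (hi k) := by
    ext i
    simp only [mem_filter, mem_univ, true_and, mem_union, mem_image]
    constructor
    · intro h
      rcases lo_or_hi k i with h' | h'
      · exact Or.inl ⟨_, h, h'.symm⟩
      · exact Or.inr ⟨_, h, h'.symm⟩
    · rintro (⟨a, ha, rfl⟩ | ⟨a, ha, rfl⟩)
      · rwa [pr_lo]
      · rwa [pr_hi]
  rw [this, card_union_of_disjoint, card_image_of_injective _ (lo_inj k),
    card_image_of_injective _ (hi_inj k)]
  · omega
  · rw [disjoint_left]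
    simp only [mem_image]
    rintro _ ⟨a, _, rfl⟩ ⟨b, _, hb⟩
    exact lo_ne_hi k a b hb.symm

/-- the equal input given by `C` -/
def inp (k : ℕ) (C : Finset (Fin (2 * k))) : Fin (4 * k) → Bool := fun i => decide (pr k i ∈ C)

lemma adversary (k : ℕ) (T : DTree (Fin (4 * k))) (A B : Finset (Fin (2 * k)))
    (hAB : Disjoint A B) (h1 : B.card ≤ A.card) (h2 : A.card ≤ B.card + 1) :
    ∃ C : Finset (Fin (2 * k)), C.card = k ∧ A ⊆ C ∧ Disjoint B C ∧
      ∃ P, P = A ∪ B ∪ (queried T (inp k C)).image (pr k) ∧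
        (P \ C).card ≤ (P ∩ C).card ∧ (P ∩ C).card ≤ (P \ C).card + 1 := by
  induction T generalizing A B with
  | leaf b =>
    have hc : A.card + B.card ≤ 2 * k := by
      rw [← card_union_of_disjoint hAB]
      simpa using card_le_univ (A ∪ B)
    have hB : Bᶜ.card = 2 * k - B.card := by simp [card_compl]
    obtain ⟨C, hAC, hCB, hC⟩ := exists_subsuperset_card_eq (s := A) (t := Bᶜ) (n := k)
      (by rw [subset_compl_iff_disjoint_right]; exact hAB) (by omega) (by omega)
    rw [subset_compl_iff_disjoint_right] at hCB
    refine ⟨C, hC, hAC, hCB.symm, _, rfl, ?_⟩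
    have e1 : (A ∪ B ∪ (queried (DTree.leaf b) (inp k C)).image (pr k)) \ C = B := by
      ext i
      have := @hAC i
      have hd : i ∈ C → i ∉ B := fun h => disjoint_left.1 hCB h
      simp [queried]
      tauto
    have e2 : (A ∪ B ∪ (queried (DTree.leaf b) (inp k C)).image (pr k)) ∩ C = A := by
      ext i
      have := @hAC i
      have hd : i ∈ C → i ∉ B := fun h => disjoint_left.1 hCB h
      simp [queried]
      tauto
    rw [e1, e2]
    exact ⟨h1, h2⟩
  | node i t0 t1 ih0 ih1 =>
    by_cases hA : pr k i ∈ A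
    · obtain ⟨C, hC, hAC, hBC, P, hP, h⟩ := ih1 A B hAB h1 h2
      refine ⟨C, hC, hAC, hBC, P, ?_, h⟩
      have : inp k C i = true := by simp [inp, hAC hA]
      rw [hP]
      ext j
      simp only [queried, this, if_true, image_insert, mem_union, mem_insert]
      by_cases hj : j = pr k i
      · subst hj; simp [hA]
      · simp [hj]
    by_cases hB : pr k i ∈ B
    · obtain ⟨C, hC, hAC, hBC, P, hP, h⟩ := ih0 A B hAB h1 h2
      refine ⟨C, hC, hAC, hBC, P, ?_, h⟩
      have : inp k C i = false := by simp [inp, disjoint_left.1 hBC hB]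
      rw [hP]
      ext j
      simp only [queried, this, image_insert, mem_union, mem_insert]
      by_cases hj : j = pr k i
      · subst hj; simp [hB]
      · simp [hj]
    by_cases hc : A.card = B.card
    · obtain ⟨C, hC, hAC, hBC, P, hP, h⟩ := ih1 (insert (pr k i) A) B
        (by rw [disjoint_insert_left]; exact ⟨hB, hAB⟩)
        (by rw [card_insert_of_notMem hA]; omega) (by rw [card_insert_of_notMem hA]; omega)
      refine ⟨C, hC, (subset_insert _ _).trans hAC, hBC, P, ?_, h⟩
      have : inp k C i = true := by simp [inp, hAC (mem_insert_self _ _)]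
      rw [hP]
      ext j
      simp only [queried, this, if_true, image_insert, mem_union, mem_insert]
      tauto
    · obtain ⟨C, hC, hAC, hBC, P, hP, h⟩ := ih0 A (insert (pr k i) B)
        (by rw [disjoint_insert_right]; exact ⟨hA, hAB⟩)
        (by rw [card_insert_of_notMem hB]; omega) (by rw [card_insert_of_notMem hB]; omega)
      rw [disjoint_insert_left] at hBC
      refine ⟨C, hC, hAC, hBC.2, P, ?_, h⟩
      have : inp k C i = false := by simp [inp, hBC.1]
      rw [hP]
      ext j
      simp only [queried, this, image_insert, mem_union, mem_insert, Bool.false_eq_true, if_false]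
      tauto

lemma inp_mem (k) (C : Finset (Fin (2 * k))) (hC : C.card = k) :
    inp k C ∈ cubeSlice (Fin (4 * k)) (2 * k) := by
  have := card_F k C
  simp only [cubeSlice, hamWeight, Set.mem_ofPred_eq, inp, decide_eq_true_eq]
  rw [this, hC]

lemma swap_mem (k) (z : Fin (4 * k) → Bool) (w : ℕ) (hz : z ∈ cubeSlice (Fin (4 * k)) w)
    (e : Equiv.Perm (Fin (4 * k))) : z ∘ e ∈ cubeSlice (Fin (4 * k)) w := by
  simp only [cubeSlice, hamWeight, Set.mem_ofPred_eq] at hz ⊢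
  rw [← hz]
  exact card_equiv e (by simp)

lemma part_card (k) (C P : Finset (Fin (2 * k))) (Q : Finset (Fin (4 * k)))
    (hP : P = Q.image (pr k)) (h : ∀ i, pr k i ∈ C → i ∈ Q) :
    2 * C.card + (P \ C).card ≤ Q.card := by
  rw [← card_F k C, ← card_filter_add_card_filter_not (s := Q) (fun i => pr k i ∈ C)]
  refine Nat.add_le_add (card_le_card ?_) ?_
  · intro i hi
    simp only [mem_filter, mem_univ, true_and] at hi ⊢
    exact ⟨h i hi, hi⟩
  · refine (card_le_card (t := (Q.filter fun i => ¬ pr k i ∈ C).image (pr k)) ?_).trans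
      card_image_le
    intro p hp
    rw [hP] at hp
    simp only [mem_sdiff, mem_image, mem_filter] at hp ⊢
    obtain ⟨⟨a, ha, rfl⟩, hb⟩ := hp
    exact ⟨a, ⟨ha, hb⟩, rfl⟩

lemma lower (k : ℕ) (T : DTree (Fin (4 * k)))
    (hT : Computes T (cubeSlice (Fin (4 * k)) (2 * k)) (EQfun k)) :
    ∃ x ∈ cubeSlice (Fin (4 * k)) (2 * k), 3 * k - 1 ≤ T.cost x := by
  obtain ⟨C, hC, -, -, P, hP, h1, h2⟩ := adversary k T ∅ ∅ (by simp) (by simp) (by simp)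
  simp only [union_idempotent, empty_union] at hP
  have hm := inp_mem k C hC
  refine ⟨_, hm, ?_⟩
  refine le_trans ?_ (queried_card T (inp k C))
  set Q := queried T (inp k C) with hQ
  have hmono : (∀ i, pr k i ∈ C → i ∈ Q) ∨ (∀ i, pr k i ∈ Cᶜ → i ∈ Q) := by
    by_contra hcon
    push Not at hcon
    obtain ⟨⟨i, hi, hiQ⟩, ⟨j, hj, hjQ⟩⟩ := hcon
    rw [mem_compl] at hj
    have hs := swap_mem k _ _ hm (Equiv.swap i j)
    have he := eval_congr T (inp k C) (inp k C ∘ Equiv.swap i j) (by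
      intro a ha
      have h1 : a ≠ i := fun h => hiQ (h ▸ ha)
      have h2 : a ≠ j := fun h => hjQ (h ▸ ha)
      simp [Equiv.swap_apply_of_ne_of_ne h1 h2])
    rw [hT _ hm, hT _ hs] at he
    have t : EQfun k (inp k C) = true := by
      rw [EQ_iff]; intro p; simp [inp, pr_lo, pr_hi]
    rw [t] at he
    have := (EQ_iff k _).1 he.symm (pr k i)
    have hp : ∀ b, pr k b = pr k i → b ≠ j := by
      rintro b hb rfl; rw [hb] at hj; exact hj hi
    have main : ∀ b, b ≠ i → pr k b = pr k i → (inp k C ∘ Equiv.swap i j) b ≠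
        (inp k C ∘ Equiv.swap i j) i := by
      intro b hb hpb
      simp [Equiv.swap_apply_of_ne_of_ne hb (hp b hpb), inp, hpb, hi, hj]
    rcases lo_or_hi k i with h | h
    · rw [← h] at this
      exact main (EQSlice.hi k (pr k i)) (by rw [h]; rw [pr_lo]; exact (lo_ne_hi k _ _).symm)
        (pr_hi k _) this.symm
    · rw [← h] at this
      exact main (lo k (pr k i)) (by rw [h, pr_hi]; exact lo_ne_hi k _ _)
        (pr_lo k _) this
  rcases hmono with h | h
  · have := part_card k C P Q hP h
    have e : P ∩ C = C := by
      rw [inter_eq_right, hP]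
      intro p hp
      exact mem_image.2 ⟨lo k p, h _ (by rwa [pr_lo]), pr_lo k p⟩
    rw [e] at h1 h2
    omega
  · have := part_card k Cᶜ P Q hP h
    have e : P \ C = Cᶜ := by
      ext p
      simp only [mem_sdiff, mem_compl]
      refine ⟨fun h => h.2, fun hp => ⟨?_, hp⟩⟩
      rw [hP]
      exact mem_image.2 ⟨lo k p, h _ (by rw [pr_lo]; simpa using hp), pr_lo k p⟩
    have e2 : P \ Cᶜ = P ∩ C := by ext p; simp
    have hcc : Cᶜ.card = k := by rw [card_compl, Fintype.card_fin, hC]; omega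
    rw [e2] at this
    rw [e] at h1 h2
    omega

/-- colour class among the first `2k-1` coordinates -/
def W (k : ℕ) (s : Fin (4 * k) → Bool) (c : Bool) : Finset (Fin (2 * k)) :=
  univ.filter fun i => i.1 < 2 * k - 1 ∧ s (lo k i) = c

/-- the first coordinates -/
noncomputable def L1 (k : ℕ) : List (Fin (4 * k)) :=
  ((univ.filter fun i : Fin (2 * k) => i.1 < 2 * k - 1).toList).map (lo k)

/-- second stage -/
noncomputable def stage2 (k : ℕ) (s : Fin (4 * k) → Bool) (c : Bool) : DTree (Fin (4 * k)) :=
  readAll ((W k s c).toList.map (hi k)) s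
    (fun s' => .leaf (decide (∀ i ∈ W k s c, s' (hi k i) = c)))

/-- the algorithm -/
noncomputable def algo (k : ℕ) : DTree (Fin (4 * k)) :=
  readAll (L1 k) (fun _ => false) fun s =>
    if (W k s true).card = k then stage2 k s true
    else if (W k s false).card = k then stage2 k s false
    else .leaf false

lemma color_card (k) (z : Fin (4 * k) → Bool) (hz : z ∈ cubeSlice (Fin (4 * k)) (2 * k))
    (c : Bool) : (univ.filter fun i => z i = c).card = 2 * k := by
  simp only [cubeSlice, hamWeight, Set.mem_ofPred_eq] at hz
  cases c with
  | true => exact hz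
  | false =>
    have := card_filter_add_card_filter_not (s := (univ : Finset (Fin (4 * k))))
      (fun i => z i = true)
    rw [hz] at this
    simp only [Bool.not_eq_true, card_univ, Fintype.card_fin] at this
    omega

lemma cert (k) (z : Fin (4 * k) → Bool) (hz : z ∈ cubeSlice (Fin (4 * k)) (2 * k))
    (c : Bool) (hW : (W k z c).card = k) :
    (∀ i ∈ W k z c, z (hi k i) = c) ↔ EQfun k z = true := by
  rw [EQ_iff]
  constructor
  · intro h
    have hsub : (univ.filter fun i => pr k i ∈ W k z c) = univ.filter fun i => z i = c := by
      apply eq_of_subset_of_card_le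
      · intro i hi
        simp only [mem_filter, mem_univ, true_and] at hi ⊢
        rcases lo_or_hi k i with h' | h'
        · rw [h']; simp only [W, mem_filter] at hi; exact hi.2.2
        · rw [h']; exact h _ hi
      · rw [card_F, color_card k z hz, hW]
    have hiff : ∀ i, z i = c ↔ pr k i ∈ W k z c := by
      intro i
      have := Finset.ext_iff.1 hsub i
      simp only [mem_filter, mem_univ, true_and] at this
      exact this.symm
    intro i
    have a := hiff (lo k i)
    have b := hiff (hi k i)
    rw [pr_lo] at a
    rw [pr_hi] at b
    have ab := a.trans b.symm
    revert ab
    cases z (lo k i) <;> cases z (hi k i) <;> cases c <;> simp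
  · intro h i hi
    rw [← h i]
    simp only [W, mem_filter] at hi
    exact hi.2.2

lemma W_cards (k) (hk : 1 ≤ k) (z : Fin (4 * k) → Bool)
    (hz : z ∈ cubeSlice (Fin (4 * k)) (2 * k)) (he : EQfun k z = true) :
    (W k z true).card = k ∨ (W k z false).card = k := by
  rw [EQ_iff] at he
  let l : Fin (2 * k) := ⟨2 * k - 1, by omega⟩
  have hfull : ∀ c, (univ.filter fun i => z (lo k i) = c).card = k := by
    intro c
    have h1 := card_F k (univ.filter fun i => z (lo k i) = c)
    have h2 : (univ.filter fun i => pr k i ∈ (univ.filter fun i => z (lo k i) = c))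
        = univ.filter fun i => z i = c := by
      ext i
      simp only [mem_filter, mem_univ, true_and]
      rcases lo_or_hi k i with h' | h'
      · rw [← h']
      · rw [he, ← h']
    rw [h2, color_card k z hz] at h1
    omega
  have key : ∀ c, z (lo k l) ≠ c → (W k z c).card = k := by
    intro c hc
    refine Eq.trans ?_ (hfull c)
    congr 1
    ext i
    simp only [W, mem_filter, mem_univ, true_and, and_iff_right_iff_imp]
    intro hi
    by_contra hlt
    apply hc
    have : l = i := by ext; simp only [l]; omega
    rw [this, hi]
  rcases hl : z (lo k l) with _ | _
  · exact Or.inl (key _ (by simp [hl]))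
  · exact Or.inr (key _ (by simp [hl]))

lemma stage2_spec (k) (s z : Fin (4 * k) → Bool) (c : Bool)
    (hz : z ∈ cubeSlice (Fin (4 * k)) (2 * k)) (hs : W k s c = W k z c)
    (hW : (W k z c).card = k) :
    (stage2 k s c).eval z = EQfun k z ∧ (stage2 k s c).cost z = k := by
  unfold stage2
  rw [(readAll_spec _ _ _ _).1, (readAll_spec _ _ _ _).2]
  simp only [DTree.eval, DTree.cost, List.length_map, length_toList, hs, hW, add_zero, and_true]
  rw [Bool.eq_iff_iff, ← cert k z hz c hW, decide_eq_true_iff]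
  refine forall₂_congr fun i hi => ?_
  rw [if_pos]
  exact List.mem_map.2 ⟨i, by simpa using hi, rfl⟩

lemma algo_spec (k) (hk : 1 ≤ k) (z : Fin (4 * k) → Bool)
    (hz : z ∈ cubeSlice (Fin (4 * k)) (2 * k)) :
    (algo k).eval z = EQfun k z ∧ (algo k).cost z ≤ 3 * k - 1 := by
  unfold algo
  rw [(readAll_spec _ _ _ _).1, (readAll_spec _ _ _ _).2]
  set s : Fin (4 * k) → Bool := fun i => if i ∈ L1 k then z i else false with hs
  have hW : ∀ c, W k s c = W k z c := by
    intro c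
    ext i
    simp only [W, mem_filter, mem_univ, true_and]
    refine and_congr_right fun hi => ?_
    have : s (lo k i) = z (lo k i) := by
      rw [hs]
      simp only
      rw [if_pos]
      exact List.mem_map.2 ⟨i, by simpa using hi, rfl⟩
    rw [this]
  have hlen : (L1 k).length = 2 * k - 1 := by
    simp only [L1, List.length_map, length_toList]
    rw [Fin.card_filter_val_lt]
    omega
  rw [hlen, hW, hW]
  split_ifs with h1 h2
  · obtain ⟨a, b⟩ := stage2_spec k s z true hz (hW _) h1
    exact ⟨a, by omega⟩
  · obtain ⟨a, b⟩ := stage2_spec k s z false hz (hW _) h2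
    exact ⟨a, by omega⟩
  · refine ⟨?_, by simp only [DTree.cost]; omega⟩
    simp only [DTree.eval]
    by_contra hne
    rcases W_cards k hk z hz (by simpa using Ne.symm hne) with h | h
    · exact h1 h
    · exact h2 h

end EQSlice

/-- The deterministic query complexity of Equality on the balanced slice of `{0,1}^{4k}`
is exactly `3k - 1`. -/
theorem stmt5 (k : ℕ) (hk : 1 ≤ k) :
    Dquery (cubeSlice (Fin (4 * k)) (2 * k)) (EQfun k) = 3 * k - 1 := by
  apply le_antisymm
  · exact Nat.sInf_le ⟨EQSlice.algo k, fun x hx => (EQSlice.algo_spec k hk x hx).1,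
      fun x hx => (EQSlice.algo_spec k hk x hx).2⟩
  · refine le_csInf ⟨_, EQSlice.algo k, fun x hx => (EQSlice.algo_spec k hk x hx).1,
      fun x hx => (EQSlice.algo_spec k hk x hx).2⟩ ?_
    rintro d ⟨T, hT, hd⟩
    obtain ⟨x, hx, hc⟩ := EQSlice.lower k T hT
    exact hc.trans (hd x hx)
end

section
/- For every Boolean function f on the balanced slice of {0,1}^n (n even), the deterministic query complexity satisfies D(f) ≥ mBC(f) − 1, where mBC(f) is the minimum balanced certificate complexity of f. -/
/-- The size of a partial assignment: the number of fixed coordinates. -/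
def certSize {ι : Type} [Fintype ι] (C : ι → Option Bool) : ℕ :=
  (Finset.univ.filter fun i => (C i).isSome).card

/-- `x` is consistent with the partial assignment `C`. -/
def ConsistentWith {ι : Type} (C : ι → Option Bool) (x : ι → Bool) : Prop :=
  ∀ i : ι, ∀ b : Bool, C i = some b → x i = b

/-- A partial assignment is balanced if it fixes as many coordinates to `0` as to `1`. -/
def BalancedCert {ι : Type} [Fintype ι] (C : ι → Option Bool) : Prop :=
  (Finset.univ.filter fun i => C i = some false).card =
    (Finset.univ.filter fun i => C i = some true).card

/-- `C` is a `b`-certificate of `f` on the domain `S`. -/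
def IsCertificate {ι : Type} (S : Set (ι → Bool)) (f : (ι → Bool) → Bool)
    (C : ι → Option Bool) (b : Bool) : Prop :=
  ∀ x ∈ S, ConsistentWith C x → f x = b

/-- Balanced certificate complexity of `f` at `x`: the smallest size of a balanced
`f x`-certificate consistent with `x`. -/
noncomputable def BC {ι : Type} [Fintype ι] (S : Set (ι → Bool))
    (f : (ι → Bool) → Bool) (x : ι → Bool) : ℕ :=
  sInf {s | ∃ C : ι → Option Bool, BalancedCert C ∧ ConsistentWith C x ∧
    IsCertificate S f C (f x) ∧ certSize C = s}

/-- Minimum balanced certificate complexity of `f`. -/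
noncomputable def mBC {ι : Type} [Fintype ι] (S : Set (ι → Bool))
    (f : (ι → Bool) → Bool) : ℕ :=
  sInf {m | ∃ x ∈ S, BC S f x = m}

theorem exists_dtree {ι : Type} [DecidableEq ι] (s : Finset ι) :
    ∀ f : (ι → Bool) → Bool, (∀ x y, (∀ i ∈ s, x i = y i) → f x = f y) →
      ∃ T : DTree ι, ∀ x, T.eval x = f x := by
  induction s using Finset.induction_on with
  | empty =>
    intro f hf
    exact ⟨.leaf (f fun _ => false), fun x => hf _ _ (by simp)⟩
  | insert a s ha ih =>
    intro f hf
    have key : ∀ b : Bool, ∃ T : DTree ι, ∀ x, T.eval x = f (Function.update x a b) := by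
      intro b
      apply ih (fun x => f (Function.update x a b))
      intro x y h
      apply hf
      intro i hi
      by_cases hia : i = a
      · subst hia; simp
      · simp only [Function.update_of_ne hia]
        exact h i ((Finset.mem_insert.1 hi).resolve_left hia)
    obtain ⟨T0, h0⟩ := key false
    obtain ⟨T1, h1⟩ := key true
    refine ⟨.node a T0 T1, fun x => ?_⟩
    cases hx : x a
    · have : Function.update x a false = x := by rw [← hx]; simp
      simp [DTree.eval, hx, h0, this]
    · have : Function.update x a true = x := by rw [← hx]; simp
      simp [DTree.eval, hx, h1, this]

theorem adversary_s6 {ι : Type} [DecidableEq ι] (T : DTree ι) :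
    ∀ Z O : Finset ι, Disjoint Z O → (Z.card = O.card ∨ Z.card = O.card + 1) →
      ∃ (Z' O' : Finset ι) (b : Bool) (q : ℕ), Z ⊆ Z' ∧ O ⊆ O' ∧ Disjoint Z' O' ∧
        (Z'.card = O'.card ∨ Z'.card = O'.card + 1) ∧
        Z'.card + O'.card ≤ Z.card + O.card + q ∧
        ∀ x : ι → Bool, (∀ i ∈ Z', x i = false) → (∀ i ∈ O', x i = true) →
          T.eval x = b ∧ T.cost x = q := by
  induction T with
  | leaf b =>
    intro Z O hd hc
    exact ⟨Z, O, b, 0, subset_rfl, subset_rfl, hd, hc, by simp, fun x _ _ => ⟨rfl, rfl⟩⟩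
  | node i t0 t1 ih0 ih1 =>
    intro Z O hd hc
    have caseZ : ∀ Z1 : Finset ι, Z ⊆ Z1 → i ∈ Z1 → Disjoint Z1 O →
        (Z1.card = O.card ∨ Z1.card = O.card + 1) → Z1.card ≤ Z.card + 1 → ∃ (Z' O' : Finset ι) (b : Bool) (q : ℕ), Z ⊆ Z' ∧ O ⊆ O' ∧ Disjoint Z' O' ∧
        (Z'.card = O'.card ∨ Z'.card = O'.card + 1) ∧
        Z'.card + O'.card ≤ Z.card + O.card + q ∧
        ∀ x : ι → Bool, (∀ i ∈ Z', x i = false) → (∀ i ∈ O', x i = true) →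
          (DTree.node i t0 t1).eval x = b ∧ (DTree.node i t0 t1).cost x = q := by
      intro Z1 hs hi hd1 hc1 hle
      obtain ⟨Z', O', b, q, h1, h2, h3, h4, h5, h6⟩ := ih0 Z1 O hd1 hc1
      exact ⟨Z', O', b, 1 + q, hs.trans h1, h2, h3, h4, by omega, fun x hx hy => by
        have := h6 x hx hy
        simp [DTree.eval, DTree.cost, hx i (h1 hi), this]⟩
    have caseO : ∀ O1 : Finset ι, O ⊆ O1 → i ∈ O1 → Disjoint Z O1 →
        (Z.card = O1.card ∨ Z.card = O1.card + 1) → O1.card ≤ O.card + 1 → ∃ (Z' O' : Finset ι) (b : Bool) (q : ℕ), Z ⊆ Z' ∧ O ⊆ O' ∧ Disjoint Z' O' ∧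
        (Z'.card = O'.card ∨ Z'.card = O'.card + 1) ∧
        Z'.card + O'.card ≤ Z.card + O.card + q ∧
        ∀ x : ι → Bool, (∀ i ∈ Z', x i = false) → (∀ i ∈ O', x i = true) →
          (DTree.node i t0 t1).eval x = b ∧ (DTree.node i t0 t1).cost x = q := by
      intro O1 hs hi hd1 hc1 hle
      obtain ⟨Z', O', b, q, h1, h2, h3, h4, h5, h6⟩ := ih1 Z O1 hd1 hc1
      exact ⟨Z', O', b, 1 + q, h1, hs.trans h2, h3, h4, by omega, fun x hx hy => by
        have := h6 x hx hy
        simp [DTree.eval, DTree.cost, hy i (h2 hi), this]⟩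
    by_cases hiZ : i ∈ Z
    · exact caseZ Z subset_rfl hiZ hd hc (by omega)
    by_cases hiO : i ∈ O
    · exact caseO O subset_rfl hiO hd hc (by omega)
    rcases hc with hc | hc
    · have hcard := Finset.card_insert_of_notMem hiZ
      exact caseZ (insert i Z) (Finset.subset_insert _ _) (Finset.mem_insert_self _ _)
        (Finset.disjoint_insert_left.2 ⟨hiO, hd⟩) (by omega) (by omega)
    · have hcard := Finset.card_insert_of_notMem hiO
      exact caseO (insert i O) (Finset.subset_insert _ _) (Finset.mem_insert_self _ _)
        (Finset.disjoint_insert_right.2 ⟨hiZ, hd⟩) (by omega) (by omega)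

theorem balance_up {n : ℕ} (hn : Even n) (Z O : Finset (Fin n)) (hd : Disjoint Z O)
    (hc : Z.card = O.card ∨ Z.card = O.card + 1) :
    ∃ O' : Finset (Fin n), O ⊆ O' ∧ Disjoint Z O' ∧ Z.card = O'.card ∧
      O'.card ≤ O.card + 1 := by
  rcases hc with hc | hc
  · exact ⟨O, subset_rfl, hd, hc, by omega⟩
  · have hu := Finset.card_union_of_disjoint hd
    have hex : ∃ j, j ∉ Z ∪ O := by
      by_contra! h
      have : Z ∪ O = Finset.univ := Finset.eq_univ_iff_forall.2 h
      rw [this, Finset.card_univ, Fintype.card_fin] at hu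
      obtain ⟨k, hk⟩ := hn
      omega
    obtain ⟨j, hj⟩ := hex
    rw [Finset.mem_union, not_or] at hj
    have hcard := Finset.card_insert_of_notMem hj.2
    exact ⟨insert j O, Finset.subset_insert _ _,
      Finset.disjoint_insert_right.2 ⟨hj.1, hd⟩, by omega, by omega⟩

/-- For every Boolean function `f` on the balanced slice of `{0,1}^n` (`n` even),
`D(f) ≥ mBC(f) - 1`. -/
theorem stmt6 (n : ℕ) (hn : Even n) (f : (Fin n → Bool) → Bool) :
    mBC (cubeSlice (Fin n) (n / 2)) f - 1 ≤ Dquery (cubeSlice (Fin n) (n / 2)) f := by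
  classical
  set S := cubeSlice (Fin n) (n / 2) with hS
  have hne : {d | ∃ T : DTree (Fin n), Computes T S f ∧ ∀ x ∈ S, T.cost x ≤ d}.Nonempty := by
    obtain ⟨T, hT⟩ := exists_dtree (Finset.univ : Finset (Fin n)) f
      (fun x y h => by rw [funext fun i => h i (Finset.mem_univ i)])
    exact ⟨Finset.univ.sup T.cost, T, fun x _ => hT x,
      fun x _ => Finset.le_sup (f := T.cost) (Finset.mem_univ x)⟩
  obtain ⟨T, hT, hcost⟩ := Nat.sInf_mem hne
  change ∀ x ∈ S, T.cost x ≤ Dquery S f at hcost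
  obtain ⟨Z, O₀, b, q, -, -, hd0, hc0, hle, hall⟩ :=
    adversary_s6 T ∅ ∅ (by simp) (by simp)
  obtain ⟨O, hO, hd, hc, hO1⟩ := balance_up hn Z O₀ hd0 hc0
  simp only [Finset.card_empty] at hle
  have hu := Finset.card_union_of_disjoint hd
  have hun : (Z ∪ O).card ≤ n := by simpa using Finset.card_le_univ (Z ∪ O)
  have hZc : Zᶜ.card = n - Z.card := by rw [Finset.card_compl, Fintype.card_fin]
  obtain ⟨A, hOA, hAZ, hA⟩ := Finset.exists_subsuperset_card_eq (s := O) (t := Zᶜ) (n := n / 2)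
    (Finset.subset_compl_iff_disjoint_left.2 hd) (by omega) (by omega)
  let x : Fin n → Bool := fun i => decide (i ∈ A)
  have hxS : x ∈ S := by
    change hamWeight x = n / 2
    simp [hamWeight, x, hA]
  have hxZ : ∀ i ∈ Z, x i = false := fun i hi => by
    have : i ∉ A := fun h => Finset.mem_compl.1 (hAZ h) hi
    simp [x, this]
  have hxO : ∀ i ∈ O, x i = true := fun i hi => by simp [x, hOA hi]
  have hx := hall x hxZ (fun i hi => hxO i (hO hi))
  have hq : q ≤ Dquery S f := hx.2 ▸ hcost x hxS
  have hnot : ∀ i ∈ O, i ∉ Z := fun i hi h => Finset.disjoint_left.1 hd h hi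
  let C : Fin n → Option Bool := fun i =>
    if i ∈ Z then some false else if i ∈ O then some true else none
  have hCf : ∀ i, C i = some false ↔ i ∈ Z := by
    intro i; by_cases h1 : i ∈ Z <;> by_cases h2 : i ∈ O <;> simp [C, h1, h2]
  have hCt : ∀ i, C i = some true ↔ i ∈ O := by
    intro i
    by_cases h2 : i ∈ O
    · simp [C, hnot i h2, h2]
    · by_cases h1 : i ∈ Z <;> simp [C, h1, h2]
  have hCs : ∀ i, (C i).isSome = true ↔ i ∈ Z ∪ O := by
    intro i; by_cases h1 : i ∈ Z <;> by_cases h2 : i ∈ O <;> simp [C, h1, h2]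
  have hsize : certSize C = (Z ∪ O).card := by
    unfold certSize; congr 1; ext i; simp only [Finset.mem_filter_univ, hCs]
  have hBC : BC S f x ≤ certSize C := by
    apply Nat.sInf_le
    refine ⟨C, ?_, ?_, ?_, rfl⟩
    · simp only [BalancedCert, hCf, hCt]
      simpa using hc
    · intro i c h
      cases c
      · exact hxZ i ((hCf i).1 h)
      · exact hxO i ((hCt i).1 h)
    · intro y hy hcon
      have := hall y (fun i hi => hcon i _ ((hCf i).2 hi))
        (fun i hi => hcon i _ ((hCt i).2 (hO hi)))
      rw [← hT y hy, ← hT x hxS, this.1, hx.1]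
  have hm : mBC S f ≤ BC S f x := Nat.sInf_le ⟨x, hxS, rfl⟩
  omega
end

section
/- Let n be even, k = n/2, and let h be a nonnegative integer satisfying 2e · C(2h,h) · C(k,h)² ≤ 2^{C(2h,h)}, where C(a,b) denotes the binomial coefficient. Then there exists a Boolean function f on the balanced slice of {0,1}^n that has no balanced certificate of size n − 2h; consequently there exists a function f on the balanced slice with mBC(f) ≥ n − O(log log n). -/
open Finset in
lemma count_overwrite {V : Type} [Fintype V] [DecidableEq V] (E : Finset V) (b : Bool)
    (G : Finset (V → Bool))
    (hG : ∀ f ∈ G, ∀ f' : V → Bool, (∀ v, v ∉ E → f' v = f v) → f' ∈ G) :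
    2 ^ E.card * (G.filter (fun f => ∀ v ∈ E, f v = b)).card ≤ G.card := by
  classical
  have h1 : 2 ^ E.card * (G.filter (fun f => ∀ v ∈ E, f v = b)).card =
      ((Finset.univ : Finset (E → Bool)) ×ˢ (G.filter (fun f => ∀ v ∈ E, f v = b))).card := by
    rw [Finset.card_product]; simp
  rw [h1]
  apply Finset.card_le_card_of_injOn
    (fun p => fun v => if h : v ∈ E then p.1 ⟨v, h⟩ else p.2 v)
  · rintro ⟨g, f⟩ hp
    simp only [Finset.coe_product, Set.mem_prod, Finset.mem_coe, Finset.mem_filter] at hp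
    apply hG f hp.2.1
    intro v hv
    simp [hv]
  · rintro ⟨g, f⟩ hp ⟨g', f'⟩ hp' heq
    simp only [Finset.coe_product, Set.mem_prod, Finset.mem_coe, Finset.mem_filter] at hp hp'
    have hv := fun v => congrFun heq v
    simp only at hv
    refine Prod.ext ?_ ?_
    · funext ⟨v, hvE⟩
      have := hv v
      simpa [hvE] using this
    · funext v
      by_cases hvE : v ∈ E
      · exact (hp.2.2 v hvE).trans (hp'.2.2 v hvE).symm
      · have := hv v
        simpa [hvE] using this

/-- `f` is constant on `E`. -/
def IsMono {V : Type} (E : Finset V) (f : V → Bool) : Prop :=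
  ∃ b, ∀ v ∈ E, f v = b

open Classical in
noncomputable def goodSet {ι V : Type} [Fintype V] (E : ι → Finset V) (S : Finset ι) :
    Finset (V → Bool) :=
  Finset.univ.filter (fun f => ∀ i ∈ S, ¬ IsMono (E i) f)

open Classical in
lemma indep {ι V : Type} [Fintype V] (E : ι → Finset V) (S : Finset ι) (i : ι)
    (hd : ∀ j ∈ S, Disjoint (E i) (E j)) :
    2 ^ (E i).card * ((goodSet E S).filter (fun f => IsMono (E i) f)).card ≤
      2 * (goodSet E S).card := by
  have hG : ∀ f ∈ goodSet E S, ∀ f' : V → Bool, (∀ v, v ∉ E i → f' v = f v) →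
      f' ∈ goodSet E S := by
    intro f hf f' hff
    simp only [goodSet, Finset.mem_filter, Finset.mem_univ, true_and] at hf ⊢
    rintro j hj ⟨b, hb⟩
    apply hf j hj
    refine ⟨b, fun v hv => ?_⟩
    rw [← hff v (fun h => Finset.disjoint_left.mp (hd j hj) h hv)]
    exact hb v hv
  have h1 := count_overwrite (E i) true _ hG
  have h2 := count_overwrite (E i) false _ hG
  have h3 : (goodSet E S).filter (fun f => IsMono (E i) f) ⊆
      (goodSet E S).filter (fun f => ∀ v ∈ E i, f v = true) ∪
      (goodSet E S).filter (fun f => ∀ v ∈ E i, f v = false) := by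
    intro f hf
    simp only [Finset.mem_filter, Finset.mem_union, IsMono, Bool.exists_bool] at hf ⊢
    tauto
  have h4 := (Finset.card_le_card h3).trans (Finset.card_union_le _ _)
  have h5 := Nat.mul_le_mul_left (2 ^ (E i).card) h4
  rw [Nat.mul_add] at h5
  omega

open Classical in
lemma good_insert {ι V : Type} [Fintype V] (E : ι → Finset V) (S : Finset ι) (i : ι) :
    (goodSet E (insert i S)).card + ((goodSet E S).filter (fun f => IsMono (E i) f)).card =
      (goodSet E S).card := by
  rw [← Finset.card_filter_add_card_filter_not (s := goodSet E S) (fun f => IsMono (E i) f),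
    add_comm]
  congr 2
  ext f
  simp only [goodSet, Finset.mem_filter, Finset.mem_univ, true_and, Finset.mem_insert,
    forall_eq_or_imp]
  tauto

open Classical in
lemma lll_step {ι V : Type} [Fintype V] (E : ι → Finset V) (r d : ℕ)
    (hr : ∀ i, (E i).card = r) (x : ℝ) (hx0 : 0 ≤ x) (hx1 : x < 1)
    (hdeg : ∀ i, ∀ S : Finset ι, i ∉ S → (∀ j ∈ S, ¬ Disjoint (E i) (E j)) → S.card ≤ d)
    (hp : 2 ≤ 2 ^ r * (x * (1 - x) ^ d)) :
    ∀ m : ℕ, ∀ S : Finset ι, S.card = m → ∀ i,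
      (((goodSet E S).filter (fun f => IsMono (E i) f)).card : ℝ) ≤ x * (goodSet E S).card := by
  intro m
  induction m using Nat.strong_induction_on with
  | _ m ih =>
  intro S hS i
  by_cases hi : i ∈ S
  · have : (goodSet E S).filter (fun f => IsMono (E i) f) = ∅ := by
      ext f
      simp only [goodSet, Finset.mem_filter, Finset.mem_univ, true_and]
      simp only [Finset.notMem_empty, iff_false]
      rintro ⟨h1, h2⟩
      exact h1 i hi h2
    rw [this]; simp; positivity
  set S1 := S.filter (fun j => ¬ Disjoint (E i) (E j)) with hS1
  set S2 := S.filter (fun j => Disjoint (E i) (E j)) with hS2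
  have hS1d : S1.card ≤ d := by
    apply hdeg i S1
    · simp [hS1, hi]
    · intro j hj; exact (Finset.mem_filter.mp hj).2
  have hU : S1 ∪ S2 = S := by
    rw [Finset.union_comm]; exact Finset.filter_union_filter_not_eq _ S
  have hdis : Disjoint S1 S2 := by
    rw [disjoint_comm]; exact Finset.disjoint_filter_filter_not S S _
  have hlow : ∀ T : Finset ι, T ⊆ S1 →
      (1 - x) ^ T.card * ((goodSet E S2).card : ℝ) ≤ (goodSet E (T ∪ S2)).card := by
    intro T
    induction T using Finset.induction_on with
    | empty => intro _; simp
    | insert a T ha ihT =>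
      intro hT
      have hT' : T ⊆ S1 := (Finset.subset_insert _ _).trans hT
      have haS : a ∈ S1 := hT (Finset.mem_insert_self _ _)
      have h1 := ihT hT'
      have hlt : (T ∪ S2).card < m := by
        rw [← hS]
        apply Finset.card_lt_card
        rw [Finset.ssubset_iff_of_subset]
        · refine ⟨a, (Finset.mem_filter.mp haS).1, ?_⟩
          rw [Finset.mem_union]
          rintro (h | h)
          · exact ha h
          · exact Finset.disjoint_left.mp hdis haS h
        · rw [← hU]; exact Finset.union_subset_union_left hT'
      have h2 := ih _ hlt _ rfl a
      have h3 := good_insert E (T ∪ S2) a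
      rw [← Finset.insert_union] at h3
      have h3' : ((goodSet E (insert a T ∪ S2)).card : ℝ) +
        (((goodSet E (T ∪ S2)).filter (fun f => IsMono (E a) f)).card : ℝ) =
        (goodSet E (T ∪ S2)).card := by exact_mod_cast h3
      rw [Finset.card_insert_of_notMem ha, pow_succ]
      have h4 := mul_le_mul_of_nonneg_left h1 (by linarith : 0 ≤ 1 - x)
      linarith
  have hl := hlow S1 subset_rfl
  rw [hU] at hl
  have hl2 : (1 - x) ^ d * ((goodSet E S2).card : ℝ) ≤ (goodSet E S).card := by
    refine le_trans ?_ hl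
    apply mul_le_mul_of_nonneg_right _ (Nat.cast_nonneg _)
    exact pow_le_pow_of_le_one (by linarith) (by linarith) hS1d
  have hin := indep E S2 i (fun j hj => (Finset.mem_filter.mp hj).2)
  rw [hr i] at hin
  have hsub : (goodSet E S).filter (fun f => IsMono (E i) f) ⊆
      (goodSet E S2).filter (fun f => IsMono (E i) f) := by
    apply Finset.filter_subset_filter
    intro f hf
    simp only [goodSet, Finset.mem_filter, Finset.mem_univ, true_and] at hf ⊢
    intro j hj
    exact hf j (Finset.mem_filter.mp hj).1
  have hsub' : (((goodSet E S).filter (fun f => IsMono (E i) f)).card : ℝ) ≤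
      ((goodSet E S2).filter (fun f => IsMono (E i) f)).card := by
    exact_mod_cast Finset.card_le_card hsub
  have hin' : (2 : ℝ) ^ r * (((goodSet E S2).filter (fun f => IsMono (E i) f)).card : ℝ) ≤
      2 * (goodSet E S2).card := by exact_mod_cast hin
  have hpos : (0 : ℝ) < 2 ^ r := by positivity
  refine hsub'.trans ?_
  refine le_of_mul_le_mul_left ?_ hpos
  refine hin'.trans ?_
  calc 2 * ((goodSet E S2).card : ℝ) ≤ 2 ^ r * (x * (1 - x) ^ d) * (goodSet E S2).card :=
        mul_le_mul_of_nonneg_right hp (Nat.cast_nonneg _)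
    _ = 2 ^ r * (x * ((1 - x) ^ d * (goodSet E S2).card)) := by ring
    _ ≤ _ := by gcongr

open Classical in
lemma lll_main {ι V : Type} [Fintype V] [Fintype ι] (E : ι → Finset V) (r d : ℕ)
    (hr : ∀ i, (E i).card = r) (x : ℝ) (hx0 : 0 ≤ x) (hx1 : x < 1)
    (hdeg : ∀ i, ∀ S : Finset ι, i ∉ S → (∀ j ∈ S, ¬ Disjoint (E i) (E j)) → S.card ≤ d)
    (hp : 2 ≤ 2 ^ r * (x * (1 - x) ^ d)) :
    ∃ f : V → Bool, ∀ i, ¬ IsMono (E i) f := by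
  have hpos : ∀ S : Finset ι, 0 < ((goodSet E S).card : ℝ) := by
    intro S
    induction S using Finset.induction_on with
    | empty =>
      have : (goodSet E (∅ : Finset ι)) = Finset.univ := by
        ext f; simp only [goodSet, Finset.mem_filter]; simp
      rw [this, Finset.card_univ]
      exact_mod_cast Fintype.card_pos
    | insert a T ha ihT =>
      have h2 := lll_step E r d hr x hx0 hx1 hdeg hp _ T rfl a
      have h3 := good_insert E T a
      have h3' : ((goodSet E (insert a T)).card : ℝ) +
        (((goodSet E T).filter (fun f => IsMono (E a) f)).card : ℝ) =
        (goodSet E T).card := by exact_mod_cast h3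
      have := mul_pos (sub_pos.mpr hx1) ihT
      linarith
  have h := hpos Finset.univ
  have h' : 0 < (goodSet E Finset.univ).card := by exact_mod_cast h
  obtain ⟨f, hf⟩ := Finset.card_pos.mp h'
  simp only [goodSet, Finset.mem_filter] at hf
  exact ⟨f, fun i => hf.2 i (Finset.mem_univ _)⟩

lemma exp_bound (d : ℕ) : 1 ≤ Real.exp 1 * (1 - 1 / ((d : ℝ) + 1)) ^ d := by
  rcases Nat.eq_zero_or_pos d with rfl | hd
  · simp
  have hd' : (0 : ℝ) < d := by exact_mod_cast hd
  have h1 : 1 + 1 / (d : ℝ) ≤ Real.exp (1 / d) := by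
    have := Real.add_one_le_exp (1 / (d : ℝ)); linarith
  have h2 : (1 + 1 / (d : ℝ)) ^ d ≤ Real.exp 1 := by
    calc _ ≤ (Real.exp (1 / d)) ^ d := pow_le_pow_left₀ (by positivity) h1 d
      _ = Real.exp 1 := by
        rw [← Real.exp_nat_mul]; congr 1; field_simp
  have h3 : (1 - 1 / ((d : ℝ) + 1)) = (1 + 1 / (d : ℝ))⁻¹ := by
    field_simp; ring
  rw [h3, inv_pow]
  have : 0 < (1 + 1 / (d : ℝ)) ^ d := by positivity
  rw [← div_eq_mul_inv, le_div_iff₀ this]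
  linarith

open Classical in
lemma two_color {ι V : Type} [Fintype V] [Fintype ι] (E : ι → Finset V) (r D : ℕ)
    (hr0 : 0 < r) (hr : ∀ i, (E i).card = r) (hD0 : 0 < D)
    (hD : ∀ v, (Finset.univ.filter (fun i => v ∈ E i)).card ≤ D)
    (hyp : 2 * Real.exp 1 * (r : ℝ) * (D : ℝ) ≤ (2 : ℝ) ^ r) :
    ∃ f : V → Bool, ∀ i, ¬ IsMono (E i) f := by
  have hdeg : ∀ i, ∀ S : Finset ι, i ∉ S → (∀ j ∈ S, ¬ Disjoint (E i) (E j)) →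
      S.card + 1 ≤ r * D := by
    intro i S hi hS
    have hsub : insert i S ⊆ (E i).biUnion (fun v => Finset.univ.filter (fun i => v ∈ E i)) := by
      intro j hj
      simp only [Finset.mem_biUnion, Finset.mem_filter, Finset.mem_univ, true_and]
      rcases Finset.mem_insert.mp hj with rfl | hj
      · have : 0 < (E j).card := by rw [hr]; exact hr0
        obtain ⟨v, hv⟩ := Finset.card_pos.mp this
        exact ⟨v, hv, hv⟩
      · exact Finset.not_disjoint_iff.mp (hS j hj)
    have := Finset.card_le_card hsub
    rw [Finset.card_insert_of_notMem hi] at this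
    refine this.trans ?_
    rw [← hr i]
    exact Finset.card_biUnion_le_card_mul _ _ _ (fun v _ => hD v)
  obtain ⟨d, hd⟩ : ∃ d, r * D = d + 1 := ⟨r * D - 1, by have := Nat.mul_pos hr0 hD0; omega⟩
  have hdR : (r : ℝ) * D = d + 1 := by exact_mod_cast hd
  have he := exp_bound d
  have he1 : (2 : ℝ) < Real.exp 1 := by have := Real.exp_one_gt_d9; linarith
  have hdpos : (0 : ℝ) < d + 1 := by positivity
  have hyp' : 2 * Real.exp 1 * ((d : ℝ) + 1) ≤ 2 ^ r := by rw [← hdR]; linarith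
  have hq : (0 : ℝ) ≤ (1 - 1 / ((d : ℝ) + 1)) := by
    rw [sub_nonneg, div_le_one hdpos]; linarith [(Nat.cast_nonneg d : (0 : ℝ) ≤ d)]
  by_cases hd0 : d = 0
  · subst hd0
    have hp : (2 : ℝ) ≤ 2 ^ r * ((1 / 2 : ℝ) * (1 - 1 / 2) ^ 0) := by
      simp at hyp' ⊢; linarith
    exact lll_main E r 0 hr (1 / 2) (by norm_num) (by norm_num)
      (fun i S h1 h2 => by have := hdeg i S h1 h2; omega) hp
  · have hd1 : (0 : ℝ) < d := by exact_mod_cast Nat.pos_of_ne_zero hd0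
    refine lll_main E r d hr (1 / ((d : ℝ) + 1)) (by positivity) ?_
      (fun i S h1 h2 => by have := hdeg i S h1 h2; omega) ?_
    · rw [div_lt_one hdpos]; linarith
    · set q := (1 - 1 / ((d : ℝ) + 1)) ^ d with hqd
      have hq0 : 0 ≤ q := pow_nonneg hq d
      calc (2 : ℝ) ≤ 2 * (Real.exp 1 * q) := by linarith
        _ = (2 * Real.exp 1 * ((d : ℝ) + 1)) * (1 / ((d : ℝ) + 1) * q) := by field_simp
        _ ≤ _ := by gcongr

lemma cert_cards {n h : ℕ} (hn : Even n) (hhn : 2 * h ≤ n) (C : Fin n → Option Bool)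
    (hb : BalancedCert C) (hs : certSize C = n - 2 * h) :
    (Finset.univ.filter fun i => C i = some false).card = n / 2 - h ∧
    (Finset.univ.filter fun i => C i = some true).card = n / 2 - h ∧
    (Finset.univ.filter fun i => C i = none).card = 2 * h := by
  classical
  have h1 : certSize C = (Finset.univ.filter fun i => C i = some false).card +
      (Finset.univ.filter fun i => C i = some true).card := by
    unfold certSize
    rw [← Finset.card_union_of_disjoint]
    · congr 1; ext i
      simp only [Finset.mem_filter, Finset.mem_univ, true_and, Finset.mem_union]
      rcases C i with _ | _ | _ <;> simp
    · rw [Finset.disjoint_filter]; intro i _ h; simp [h]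
  have h2 : certSize C + (Finset.univ.filter fun i => C i = none).card = n := by
    unfold certSize
    have := Finset.card_filter_add_card_filter_not (s := (Finset.univ : Finset (Fin n)))
      (fun i => (C i).isSome = true)
    simpa using this
  unfold BalancedCert at hb
  obtain ⟨k, rfl⟩ := hn
  omega

open Classical in
lemma edge_card {n h : ℕ} (hn : Even n) (hhn : 2 * h ≤ n) (C : Fin n → Option Bool)
    (hb : BalancedCert C) (hs : certSize C = n - 2 * h) :
    (Finset.univ.filter fun x => x ∈ cubeSlice (Fin n) (n / 2) ∧ ConsistentWith C x).card =
      Nat.choose (2 * h) h := by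
  obtain ⟨-, h1, h0⟩ := cert_cards hn hhn C hb hs
  rw [← h0, ← Finset.card_powersetCard]
  have hsplit : ∀ x, ConsistentWith C x → hamWeight x = (n / 2 - h) +
      (Finset.univ.filter fun i => C i = none ∧ x i = true).card := by
    intro x hx
    rw [← h1]
    unfold hamWeight
    rw [← Finset.card_union_of_disjoint]
    · congr 1; ext i
      have := hx i
      simp only [Finset.mem_filter, Finset.mem_univ, true_and, Finset.mem_union]
      rcases hc : C i with _ | _ | _ <;> simp_all
    · rw [Finset.disjoint_filter]; intro i _ h; simp [h]
  have hle : h ≤ n / 2 := by omega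
  apply Finset.card_bij (fun x _ => Finset.univ.filter fun i => C i = none ∧ x i = true)
  · intro x hx
    simp only [Finset.mem_filter, Finset.mem_univ, true_and] at hx
    rw [Finset.mem_powersetCard]
    constructor
    · intro i; simp; tauto
    · have := hsplit x hx.2
      have h3 : hamWeight x = n / 2 := hx.1
      omega
  · intro x hx y hy hxy
    simp only [Finset.mem_filter, Finset.mem_univ, true_and] at hx hy
    funext i
    have h3 := Finset.ext_iff.mp hxy i
    simp only [Finset.mem_filter, Finset.mem_univ, true_and] at h3
    rcases hc : C i with _ | b
    · simp only [hc, true_and] at h3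
      exact Bool.eq_iff_iff.mpr h3
    · rw [hx.2 i b hc, hy.2 i b hc]
  · intro T hT
    rw [Finset.mem_powersetCard] at hT
    have hcons : ConsistentWith C (fun i => (C i).getD (decide (i ∈ T))) := by
      intro i b hc; simp [hc]
    have hfil : (Finset.univ.filter fun i => C i = none ∧ (C i).getD (decide (i ∈ T)) = true)
        = T := by
      ext i
      simp only [Finset.mem_filter, Finset.mem_univ, true_and]
      constructor
      · rintro ⟨hc, h⟩; simpa [hc] using h
      · intro hi
        have hc := hT.1 hi
        simp only [Finset.mem_filter, Finset.mem_univ, true_and] at hc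
        simp [hc, hi]
    refine ⟨fun i => (C i).getD (decide (i ∈ T)), ?_, hfil⟩
    simp only [Finset.mem_filter, Finset.mem_univ, true_and]
    refine ⟨?_, hcons⟩
    have := hsplit _ hcons
    rw [hfil] at this
    show hamWeight _ = _
    omega

lemma slice_cards {n : ℕ} (hn : Even n) (x : Fin n → Bool) (hx : x ∈ cubeSlice (Fin n) (n / 2)) :
    (Finset.univ.filter fun i => x i = true).card = n / 2 ∧
    (Finset.univ.filter fun i => x i = false).card = n / 2 := by
  have h1 : (Finset.univ.filter fun i => x i = true).card = n / 2 := hx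
  have := Finset.card_filter_add_card_filter_not (s := (Finset.univ : Finset (Fin n)))
      (fun i => x i = true)
  simp at this
  obtain ⟨k, rfl⟩ := hn
  omega

open Classical in
lemma deg_card {n h : ℕ} (hn : Even n) (hhn : 2 * h ≤ n) (x : Fin n → Bool)
    (hx : x ∈ cubeSlice (Fin n) (n / 2)) :
    (Finset.univ.filter fun C : Fin n → Option Bool => (BalancedCert C ∧ certSize C = n - 2 * h) ∧
      ConsistentWith C x).card ≤ Nat.choose (n / 2) h ^ 2 := by
  obtain ⟨hx1, hx0⟩ := slice_cards hn x hx
  have : Nat.choose (n / 2) h ^ 2 =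
      ((Finset.univ.filter fun i => x i = true).powersetCard h ×ˢ
       (Finset.univ.filter fun i => x i = false).powersetCard h).card := by
    rw [Finset.card_product, Finset.card_powersetCard, Finset.card_powersetCard, hx1, hx0, sq]
  rw [this]
  apply Finset.card_le_card_of_injOn (fun C =>
    (Finset.univ.filter fun i => C i = none ∧ x i = true,
     Finset.univ.filter fun i => C i = none ∧ x i = false))
  · intro C hC
    simp only [Finset.coe_filter, Finset.mem_univ, true_and, Set.mem_ofPred_eq] at hC
    obtain ⟨⟨hb, hs⟩, hc⟩ := hC
    obtain ⟨c0, c1, -⟩ := cert_cards hn hhn C hb hs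
    have key : ∀ b : Bool, (Finset.univ.filter fun i => C i = some b).card +
        (Finset.univ.filter fun i => C i = none ∧ x i = b).card =
        (Finset.univ.filter fun i => x i = b).card := by
      intro b
      rw [← Finset.card_union_of_disjoint]
      · congr 1; ext i
        have := hc i
        simp only [Finset.mem_filter, Finset.mem_univ, true_and, Finset.mem_union]
        rcases hci : C i with _ | b'
        · simp
        · have := hc i b' hci
          simp [this]
      · rw [Finset.disjoint_filter]; intro i _ h; simp [h]
    have k1 := key true
    have k0 := key false
    simp only [Finset.coe_product, Set.mem_prod, Finset.mem_coe, Finset.mem_powersetCard]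
    refine ⟨⟨?_, by omega⟩, ⟨?_, by omega⟩⟩
    · intro i; simp
    · intro i; simp
  · intro C hC C' hC' heq
    simp only [Finset.coe_filter, Finset.mem_univ, true_and, Set.mem_ofPred_eq] at hC hC'
    simp only [Prod.mk.injEq, Finset.ext_iff, Finset.mem_filter, Finset.mem_univ, true_and] at heq
    funext i
    have e1 := heq.1 i
    have e2 := heq.2 i
    have hiff : C i = none ↔ C' i = none := by
      cases hxi : x i <;> simp [hxi] at e1 e2 <;> assumption
    rcases h1 : C i with _ | b
    · exact (hiff.mp h1).symm
    · rcases h2 : C' i with _ | b'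
      · rw [hiff.mpr h2] at h1; cases h1
      · rw [← hC.2 i b h1, ← hC'.2 i b' h2]

lemma extend_cert {n h : ℕ} (hn : Even n) (hhn : 2 * h ≤ n) (x : Fin n → Bool)
    (hx : x ∈ cubeSlice (Fin n) (n / 2)) (C : Fin n → Option Bool)
    (hb : BalancedCert C) (hc : ConsistentWith C x) (hs : certSize C < n - 2 * h) :
    ∃ C' : Fin n → Option Bool, BalancedCert C' ∧ certSize C' = n - 2 * h ∧
      ∀ y, ConsistentWith C' y → ConsistentWith C y := by
  classical
  obtain ⟨hx1, hx0⟩ := slice_cards hn x hx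
  have hsz : ∀ C : Fin n → Option Bool, certSize C =
      (Finset.univ.filter fun i => C i = some false).card +
      (Finset.univ.filter fun i => C i = some true).card := by
    intro C
    unfold certSize
    rw [← Finset.card_union_of_disjoint]
    · congr 1; ext i
      simp only [Finset.mem_filter, Finset.mem_univ, true_and, Finset.mem_union]
      rcases C i with _ | _ | _ <;> simp
    · rw [Finset.disjoint_filter]; intro i _ h; simp [h]
  have hszC := hsz C
  have hb' := hb
  unfold BalancedCert at hb'
  have hsub : ∀ b : Bool, (Finset.univ.filter fun i => C i = some b) ⊆
      (Finset.univ.filter fun i => x i = b) := by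
    intro b i hi
    simp only [Finset.mem_filter, Finset.mem_univ, true_and] at hi ⊢
    exact hc i b hi
  obtain ⟨Z, hZ1, hZ2, hZ3⟩ := Finset.exists_subsuperset_card_eq (n := n / 2 - h) (hsub false)
    (by omega) (by omega)
  obtain ⟨O, hO1, hO2, hO3⟩ := Finset.exists_subsuperset_card_eq (n := n / 2 - h) (hsub true)
    (by omega) (by omega)
  have hZm : ∀ i ∈ Z, x i = false := fun i hi => by simpa using hZ2 hi
  have hOm : ∀ i ∈ O, x i = true := fun i hi => by simpa using hO2 hi
  let C' : Fin n → Option Bool := fun i => if i ∈ Z ∪ O then some (x i) else none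
  have f0 : (Finset.univ.filter fun i => C' i = some false) = Z := by
    ext i
    have := hZm i
    have := hOm i
    simp only [C', Finset.mem_filter, Finset.mem_univ, true_and, Finset.mem_union]
    by_cases hz : i ∈ Z <;> by_cases ho : i ∈ O <;> simp_all
  have f1 : (Finset.univ.filter fun i => C' i = some true) = O := by
    ext i
    have := hZm i
    have := hOm i
    simp only [C', Finset.mem_filter, Finset.mem_univ, true_and, Finset.mem_union]
    by_cases hz : i ∈ Z <;> by_cases ho : i ∈ O <;> simp_all
  refine ⟨C', ?_, ?_, ?_⟩
  · unfold BalancedCert; rw [f0, f1, hZ3, hO3]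
  · rw [hsz C', f0, f1, hZ3, hO3]
    obtain ⟨k, rfl⟩ := hn
    omega
  · intro y hy i b hib
    have hxi := hc i b hib
    apply hy
    have : i ∈ Z ∪ O := by
      rw [Finset.mem_union]
      cases b
      · left; apply hZ1; simp [hib]
      · right; apply hO1; simp [hib]
    simp only [C']; rw [if_pos this, hxi]

lemma slice_nonempty (n : ℕ) : ∃ x, x ∈ cubeSlice (Fin n) (n / 2) := by
  obtain ⟨T, -, hT⟩ := Finset.exists_subset_card_eq
    (s := (Finset.univ : Finset (Fin n))) (n := n / 2) (by simp; omega)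
  refine ⟨fun i => decide (i ∈ T), ?_⟩
  show hamWeight _ = _
  unfold hamWeight
  simpa using hT

/-- Lovász-local-lemma bound: if `n` is even, `k = n/2`, and the nonnegative integer `h`
(with `2h ≤ n`) satisfies `2e·C(2h,h)·C(k,h)² ≤ 2^{C(2h,h)}`, then some Boolean function
on the balanced slice of `{0,1}^n` has no balanced certificate of size `n - 2h`;
consequently it satisfies `mBC(f) ≥ n - 2h` (so there are functions with
`mBC(f) ≥ n - O(log log n)`). -/
theorem stmt7 (n h : ℕ) (hn : Even n) (hhn : 2 * h ≤ n)
    (hyp : 2 * Real.exp 1 * (Nat.choose (2 * h) h : ℝ) * (Nat.choose (n / 2) h : ℝ) ^ 2 ≤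
      (2 : ℝ) ^ (Nat.choose (2 * h) h)) :
    ∃ f : (Fin n → Bool) → Bool,
      (¬ ∃ (C : Fin n → Option Bool) (b : Bool), BalancedCert C ∧ certSize C = n - 2 * h ∧
          IsCertificate (cubeSlice (Fin n) (n / 2)) f C b) ∧
      n - 2 * h ≤ mBC (cubeSlice (Fin n) (n / 2)) f := by
  classical
  let ι := {C : Fin n → Option Bool // BalancedCert C ∧ certSize C = n - 2 * h}
  let E : ι → Finset (Fin n → Bool) := fun C =>
    Finset.univ.filter fun x => x ∈ cubeSlice (Fin n) (n / 2) ∧ ConsistentWith C.1 x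
  have hle : h ≤ n / 2 := by omega
  obtain ⟨f, hf⟩ := two_color E (Nat.choose (2 * h) h) (Nat.choose (n / 2) h ^ 2)
    (Nat.choose_pos (by omega)) (fun C => edge_card hn hhn C.1 C.2.1 C.2.2)
    (pow_pos (Nat.choose_pos hle) 2) (by
      intro x
      by_cases hx : x ∈ cubeSlice (Fin n) (n / 2)
      · refine le_trans ?_ (deg_card hn hhn x hx)
        apply Finset.card_le_card_of_injOn (fun C => C.1)
        · intro C hC
          simp only [E, Finset.coe_filter, Finset.mem_filter, Finset.mem_univ, true_and,
            Set.mem_ofPred_eq] at hC ⊢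
          exact ⟨C.2, hC.2⟩
        · exact Subtype.val_injective.injOn
      · refine le_of_eq_of_le (Finset.card_eq_zero.mpr ?_) (Nat.zero_le _)
        ext C; simp [E, hx]) (by push_cast; exact hyp)
  have hno : ¬ ∃ (C : Fin n → Option Bool) (b : Bool), BalancedCert C ∧
      certSize C = n - 2 * h ∧ IsCertificate (cubeSlice (Fin n) (n / 2)) f C b := by
    rintro ⟨C, b, hb, hs, hcert⟩
    apply hf ⟨C, hb, hs⟩
    refine ⟨b, fun v hv => ?_⟩
    simp only [E, Finset.mem_filter, Finset.mem_univ, true_and] at hv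
    exact hcert v hv.1 hv.2
  refine ⟨f, hno, ?_⟩
  obtain ⟨x0, hx0⟩ := slice_nonempty n
  have hne : {m | ∃ x ∈ cubeSlice (Fin n) (n / 2),
      BC (cubeSlice (Fin n) (n / 2)) f x = m}.Nonempty := ⟨_, x0, hx0, rfl⟩
  obtain ⟨x, hx, hxm⟩ := Nat.sInf_mem hne
  unfold mBC
  rw [← hxm]
  have hne2 : {s | ∃ C : Fin n → Option Bool, BalancedCert C ∧ ConsistentWith C x ∧
      IsCertificate (cubeSlice (Fin n) (n / 2)) f C (f x) ∧ certSize C = s}.Nonempty := by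
    refine ⟨_, fun i => some (x i), ?_, ?_, ?_, rfl⟩
    · obtain ⟨h1, h0⟩ := slice_cards hn x hx
      unfold BalancedCert
      simp only [Option.some.injEq]
      rw [h1, h0]
    · intro i b hib; simpa using hib
    · intro y _ hy
      have : y = x := funext fun i => hy i (x i) rfl
      rw [this]
  obtain ⟨C, hb, hc, hcert, hs⟩ := Nat.sInf_mem hne2
  unfold BC
  rw [← hs]
  by_contra hlt
  push Not at hlt
  obtain ⟨C', hb', hs', hext⟩ := extend_cert hn hhn x hx C hb hc hlt
  exact hno ⟨C', f x, hb', hs', fun y hy hcy => hcert y hy (hext y hcy)⟩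
end

section
/- There exists a constant c > 0 such that for all sufficiently large even n there exists a Boolean function f on the balanced slice of {0,1}^n with deterministic query complexity D(f) ≥ n − c · log log n. -/
namespace SliceAux

open Finset

lemma step {n : ℕ} (A : Finset (Fin n)) (y : Fin n → Bool) (S : Set (Fin n → Bool))
    (hS : ∀ x ∈ S, ∀ i, i ∉ A → x i = y i) (hA : A.Nonempty)
    (g : (Fin n → Bool) → Bool) (d : ℕ) (T : DTree (Fin n)) :
    Computes T S g → (∀ x ∈ S, T.cost x ≤ d + 1) →
    ∃ i ∈ A, ∀ b : Bool, ∃ T' : DTree (Fin n),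
      Computes T' (S ∩ {x | x i = b}) g ∧ ∀ x ∈ S ∩ {x | x i = b}, T'.cost x ≤ d := by
  induction T with
  | leaf b =>
    intro h1 h2
    obtain ⟨i, hi⟩ := hA
    refine ⟨i, hi, fun c => ⟨.leaf b, fun x hx => h1 x hx.1, fun x hx => ?_⟩⟩
    simp [DTree.cost]
  | node i t0 t1 ih0 ih1 =>
    intro h1 h2
    by_cases hi : i ∈ A
    · refine ⟨i, hi, fun c => ?_⟩
      cases c with
      | false =>
        refine ⟨t0, fun x hx => ?_, fun x hx => ?_⟩
        · have := h1 x hx.1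
          have hx2 : x i = false := hx.2
          simpa [DTree.eval, hx2] using this
        · have := h2 x hx.1
          have hx2 : x i = false := hx.2
          simp [DTree.cost, hx2] at this
          omega
      | true =>
        refine ⟨t1, fun x hx => ?_, fun x hx => ?_⟩
        · have := h1 x hx.1
          have hx2 : x i = true := hx.2
          simpa [DTree.eval, hx2] using this
        · have := h2 x hx.1
          have hx2 : x i = true := hx.2
          simp [DTree.cost, hx2] at this
          omega
    · cases hy : y i with
      | false =>
        apply ih0
        · intro x hx
          have := h1 x hx
          have hx2 := hS x hx i hi
          simpa [DTree.eval, hx2, hy] using this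
        · intro x hx
          have := h2 x hx
          have hx2 := hS x hx i hi
          simp [DTree.cost, hx2, hy] at this
          omega
      | true =>
        apply ih1
        · intro x hx
          have := h1 x hx
          have hx2 := hS x hx i hi
          simpa [DTree.eval, hx2, hy] using this
        · intro x hx
          have := h2 x hx
          have hx2 := hS x hx i hi
          simp [DTree.cost, hx2, hy] at this
          omega

open Classical in
noncomputable def Fam {n : ℕ} (S : Set (Fin n → Bool)) (d : ℕ) :
    Finset ((Fin n → Bool) → Bool) :=
  Finset.univ.filter fun g => (∀ x, x ∉ S → g x = false) ∧
    ∃ T : DTree (Fin n), Computes T S g ∧ ∀ x ∈ S, T.cost x ≤ d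

lemma mem_Fam {n : ℕ} (S : Set (Fin n → Bool)) (d : ℕ) (g : (Fin n → Bool) → Bool) :
    g ∈ Fam S d ↔ (∀ x, x ∉ S → g x = false) ∧
    ∃ T : DTree (Fin n), Computes T S g ∧ ∀ x ∈ S, T.cost x ≤ d := by
  simp [Fam]

def sub {n : ℕ} (A : Finset (Fin n)) (y : Fin n → Bool) (a : ℕ) : Set (Fin n → Bool) :=
  {x | (∀ i, i ∉ A → x i = y i) ∧ (A.filter fun i => x i = true).card = a}

lemma sub_true {n : ℕ} (A : Finset (Fin n)) (y : Fin n → Bool) (a : ℕ) (i : Fin n)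
    (hi : i ∈ A) :
    sub A y (a + 1) ∩ {x | x i = true} = sub (A.erase i) (Function.update y i true) a := by
  ext x
  simp only [sub, Set.mem_inter_iff, Set.mem_ofPred_eq]
  have key : x i = true → (A.filter fun i => x i = true).card =
      ((A.erase i).filter fun i => x i = true).card + 1 := by
    intro h
    rw [Finset.filter_erase, Finset.card_erase_add_one]
    simp [hi, h]
  constructor
  · rintro ⟨⟨h1, h2⟩, h3⟩
    refine ⟨fun j hj => ?_, by have := key h3; omega⟩
    by_cases hji : j = i
    · subst hji; simp [h3]
    · rw [Function.update_of_ne hji]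
      exact h1 j (fun h => hj (Finset.mem_erase.2 ⟨hji, h⟩))
  · rintro ⟨h1, h2⟩
    have h3 : x i = true := by simpa using h1 i (by simp)
    refine ⟨⟨fun j hj => ?_, by have := key h3; omega⟩, h3⟩
    have hji : j ≠ i := fun h => hj (h ▸ hi)
    have := h1 j (fun h => hj (Finset.mem_of_mem_erase h))
    rwa [Function.update_of_ne hji] at this

lemma sub_false {n : ℕ} (A : Finset (Fin n)) (y : Fin n → Bool) (a : ℕ) (i : Fin n)
    (hi : i ∈ A) :
    sub A y a ∩ {x | x i = false} = sub (A.erase i) (Function.update y i false) a := by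
  ext x
  simp only [sub, Set.mem_inter_iff, Set.mem_ofPred_eq]
  have key : x i = false → (A.filter fun i => x i = true).card =
      ((A.erase i).filter fun i => x i = true).card := by
    intro h
    rw [Finset.filter_erase, Finset.erase_eq_of_notMem]
    simp [h]
  constructor
  · rintro ⟨⟨h1, h2⟩, h3⟩
    refine ⟨fun j hj => ?_, by have := key h3; omega⟩
    by_cases hji : j = i
    · subst hji; simp [h3]
    · rw [Function.update_of_ne hji]
      exact h1 j (fun h => hj (Finset.mem_erase.2 ⟨hji, h⟩))
  · rintro ⟨h1, h2⟩
    have h3 : x i = false := by simpa using h1 i (by simp)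
    refine ⟨⟨fun j hj => ?_, by have := key h3; omega⟩, h3⟩
    have hji : j ≠ i := fun h => hj (h ▸ hi)
    have := h1 j (fun h => hj (Finset.mem_of_mem_erase h))
    rwa [Function.update_of_ne hji] at this

def P (k d a : ℕ) : ℕ := ∑ i ∈ Finset.range (k + 1), if i ≤ a then d.choose (a - i) else 0

lemma P_pos (k d a : ℕ) (h : a ≤ d + k) : 1 ≤ P k d a := by
  have hs : ∀ i ∈ Finset.range (k + 1), (if i ≤ a then d.choose (a - i) else 0) ≤ P k d a :=
    fun i hi => Finset.single_le_sum
      (f := fun i => if i ≤ a then d.choose (a - i) else 0) (fun _ _ => Nat.zero_le _) hi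
  by_cases hak : a ≤ k
  · simpa using hs a (by simp; omega)
  · have h1 := hs k (by simp)
    rw [if_pos (by omega)] at h1
    have : 0 < d.choose (a - k) := Nat.choose_pos (by omega)
    omega

lemma P_succ (k d a : ℕ) : P k (d + 1) (a + 1) = P k d a + P k d (a + 1) := by
  unfold P
  rw [← Finset.sum_add_distrib]
  apply Finset.sum_congr rfl
  intro i _
  by_cases h1 : i ≤ a
  · rw [if_pos (by omega), if_pos h1, if_pos (by omega)]
    have : a + 1 - i = (a - i) + 1 := by omega
    rw [this, Nat.choose_succ_succ]
  · by_cases h2 : i = a + 1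
    · subst h2; simp
    · rw [if_neg (by omega), if_neg h1, if_neg (by omega)]

lemma P_le (k d a : ℕ) : P k d a ≤ (k + 1) * d.choose (d / 2) := by
  unfold P
  calc _ ≤ ∑ i ∈ Finset.range (k + 1), d.choose (d / 2) := by
        apply Finset.sum_le_sum
        intro i _
        split_ifs
        · exact Nat.choose_le_middle _ _
        · exact Nat.zero_le _
    _ = _ := by simp

lemma card_const {n : ℕ} (S : Set (Fin n → Bool)) (d : ℕ)
    (h : ∀ g ∈ Fam S d, ∀ x ∈ S, ∀ y ∈ S, g x = g y) : (Fam S d).card ≤ 2 := by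
  classical
  have : Fam S d ⊆ (Finset.univ : Finset Bool).image
      (fun b => fun x => if x ∈ S then b else false) := by
    intro g hg
    simp only [Finset.mem_image, Finset.mem_univ, true_and]
    have h0 := ((mem_Fam _ _ _).1 hg).1
    by_cases hS : ∃ x, x ∈ S
    · obtain ⟨x, hx⟩ := hS
      refine ⟨g x, ?_⟩
      funext z
      by_cases hz : z ∈ S
      · simp [hz]; exact h g hg x hx z hz
      · simp [hz, h0 z hz]
    · refine ⟨false, ?_⟩
      funext z
      have hz : z ∉ S := fun hz => hS ⟨z, hz⟩
      simp [h0 z hz]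
  calc _ ≤ _ := Finset.card_le_card this
    _ ≤ _ := Finset.card_image_le
    _ = 2 := by simp

lemma count {n : ℕ} (hn : 2 ≤ n) (k d : ℕ) : ∀ (A : Finset (Fin n)) (y : Fin n → Bool) (a : ℕ),
    A.card = d + k → a ≤ d + k → n * (Fam (sub A y a) d).card ≤ n ^ (2 * P k d a) := by
  have small : ∀ (d : ℕ) (A : Finset (Fin n)) (y : Fin n → Bool) (a : ℕ), a ≤ d + k →
      (∀ g ∈ Fam (sub A y a) d, ∀ x ∈ sub A y a, ∀ z ∈ sub A y a, g x = g z) →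
      n * (Fam (sub A y a) d).card ≤ n ^ (2 * P k d a) := by
    intro d A y a ha h
    have h1 := card_const _ _ h
    have h2 := P_pos k d a ha
    calc _ ≤ n * n := Nat.mul_le_mul_left _ (h1.trans hn)
      _ = n ^ 2 := by ring
      _ ≤ _ := Nat.pow_le_pow_right (by omega) (by omega)
  induction d with
  | zero =>
    intro A y a hA ha
    apply small _ _ _ _ ha
    intro g hg x hx z hz
    obtain ⟨_, T, h1, h2⟩ := (mem_Fam _ _ _).1 hg
    rw [← h1 x hx, ← h1 z hz]
    cases T with
    | leaf b => rfl
    | node i t0 t1 =>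
      have := h2 x hx
      simp [DTree.cost] at this
  | succ d ih =>
    intro A y a hA ha
    have sing : (∀ x ∈ sub A y a, ∀ z ∈ sub A y a, x = z) →
        n * (Fam (sub A y a) (d + 1)).card ≤ n ^ (2 * P k (d + 1) a) := by
      intro h
      apply small _ _ _ _ ha
      intro g _ x hx z hz
      rw [h x hx z hz]
    rcases Nat.eq_zero_or_pos a with h0 | hpos
    · apply sing
      intro x hx z hz
      funext i
      by_cases hi : i ∈ A
      · have e : ∀ x ∈ sub A y a, x i = false := by
          intro x hx
          have := hx.2
          rw [h0, Finset.card_eq_zero, Finset.filter_eq_empty_iff] at this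
          simpa using this hi
        rw [e x hx, e z hz]
      · rw [hx.1 i hi, hz.1 i hi]
    rcases Nat.eq_or_lt_of_le ha with hb | hb
    · apply sing
      intro x hx z hz
      funext i
      by_cases hi : i ∈ A
      · have e : ∀ x ∈ sub A y a, x i = true := by
          intro x hx
          have := hx.2
          rw [hb, ← hA, Finset.card_filter_eq_iff] at this
          exact this i hi
        rw [e x hx, e z hz]
      · rw [hx.1 i hi, hz.1 i hi]
    obtain ⟨a, rfl⟩ : ∃ a', a = a' + 1 := ⟨a - 1, by omega⟩
    classical
    have hsub : Fam (sub A y (a + 1)) (d + 1) ⊆ A.biUnion fun i =>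
        Finset.image₂ (fun g0 g1 => fun x => (g0 x || g1 x))
          (Fam (sub (A.erase i) (Function.update y i false) (a + 1)) d)
          (Fam (sub (A.erase i) (Function.update y i true) a) d) := by
      intro g hg
      obtain ⟨hg0, T, h1, h2⟩ := (mem_Fam _ _ _).1 hg
      obtain ⟨i, hi, hT⟩ := step A y _ (fun x hx => hx.1)
        (Finset.card_pos.1 (by omega)) g d T h1 h2
      rw [Finset.mem_biUnion]
      refine ⟨i, hi, ?_⟩
      rw [Finset.mem_image₂]
      refine ⟨fun x => g x && !(x i), ?_, fun x => g x && x i, ?_, ?_⟩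
      · rw [mem_Fam, ← sub_false A y _ i hi]
        obtain ⟨T', h3, h4⟩ := hT false
        refine ⟨fun x hx => ?_, T', fun x hx => ?_, h4⟩
        · by_cases hxs : x ∈ sub A y (a + 1)
          · have : x i = true := by
              by_contra hc
              exact hx ⟨hxs, by simpa using hc⟩
            simp [this]
          · simp [hg0 x hxs]
        · have : x i = false := hx.2
          rw [h3 x hx]; simp [this]
      · rw [mem_Fam, ← sub_true A y _ i hi]
        obtain ⟨T', h3, h4⟩ := hT true
        refine ⟨fun x hx => ?_, T', fun x hx => ?_, h4⟩
        · by_cases hxs : x ∈ sub A y (a + 1)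
          · have : x i = false := by
              by_contra hc
              exact hx ⟨hxs, by simpa using hc⟩
            simp [this]
          · simp [hg0 x hxs]
        · have : x i = true := hx.2
          rw [h3 x hx]; simp [this]
      · funext x
        cases h : g x <;> cases h' : x i <;> simp [h, h']
    have hU : ∀ i ∈ A, n * (n * (Finset.image₂ (fun g0 g1 => fun x => (g0 x || g1 x))
          (Fam (sub (A.erase i) (Function.update y i false) (a + 1)) d)
          (Fam (sub (A.erase i) (Function.update y i true) a) d)).card) ≤
          n ^ (2 * P k (d + 1) (a + 1)) := by
      intro i hi
      have hc : (A.erase i).card = d + k := by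
        rw [Finset.card_erase_of_mem hi]; omega
      have e0 := ih (A.erase i) (Function.update y i false) (a + 1) hc (by omega)
      have e1 := ih (A.erase i) (Function.update y i true) a hc (by omega)
      have e2 := Finset.card_image₂_le (fun (g0 g1 : (Fin n → Bool) → Bool) => fun x => (g0 x || g1 x))
          (Fam (sub (A.erase i) (Function.update y i false) (a + 1)) d)
          (Fam (sub (A.erase i) (Function.update y i true) a) d)
      calc _ ≤ n * (n * (_ * _)) := Nat.mul_le_mul_left _ (Nat.mul_le_mul_left _ e2)
        _ = (n * (Fam (sub (A.erase i) (Function.update y i false) (a + 1)) d).card) *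
            (n * (Fam (sub (A.erase i) (Function.update y i true) a) d).card) := by ring
        _ ≤ _ := Nat.mul_le_mul e0 e1
        _ = _ := by rw [← pow_add, P_succ]; congr 1; ring
    have hb := (Finset.card_le_card hsub).trans Finset.card_biUnion_le
    have hAn : A.card ≤ n := by simpa using Finset.card_le_univ A
    have hn0 : 0 < n := by omega
    refine Nat.le_of_mul_le_mul_left ?_ hn0
    calc n * (n * _) ≤ n * (n * _) := Nat.mul_le_mul_left _ (Nat.mul_le_mul_left _ hb)
      _ = ∑ i ∈ A, _ := by rw [Finset.mul_sum, Finset.mul_sum]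
      _ ≤ ∑ i ∈ A, n ^ (2 * P k (d + 1) (a + 1)) := Finset.sum_le_sum hU
      _ = A.card * _ := by simp
      _ ≤ _ := Nat.mul_le_mul_right _ hAn

lemma exists_tree {n : ℕ} (A : Finset (Fin n)) : ∀ f : (Fin n → Bool) → Bool,
    (∀ x y : Fin n → Bool, (∀ i ∈ A, x i = y i) → f x = f y) →
    ∃ T : DTree (Fin n), ∀ x, T.eval x = f x := by
  induction A using Finset.induction_on with
  | empty =>
    intro f hf
    exact ⟨.leaf (f fun _ => false), fun x => hf _ _ (by simp)⟩
  | insert i A hi ih =>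
    intro f hf
    have key : ∀ b : Bool, ∃ T : DTree (Fin n), ∀ x, T.eval x = f (Function.update x i b) := by
      intro b
      apply ih
      intro x y hxy
      apply hf
      intro j hj
      by_cases hji : j = i
      · subst hji; simp
      · simp only [Function.update_of_ne hji]
        exact hxy j (Finset.mem_of_mem_insert_of_ne hj hji)
    obtain ⟨T0, h0⟩ := key false
    obtain ⟨T1, h1⟩ := key true
    refine ⟨.node i T0 T1, fun x => ?_⟩
    cases hx : x i with
    | false =>
      simp only [DTree.eval, hx, h0]
      simp [← hx]
    | true =>
      simp only [DTree.eval, hx, h1]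
      simp [← hx]

lemma Dquery_attained {n : ℕ} (S : Set (Fin n → Bool)) (f : (Fin n → Bool) → Bool) (d : ℕ)
    (h : Dquery S f ≤ d) : ∃ T : DTree (Fin n), Computes T S f ∧ ∀ x ∈ S, T.cost x ≤ d := by
  have hne : {d | ∃ T : DTree (Fin n), Computes T S f ∧ ∀ x ∈ S, T.cost x ≤ d}.Nonempty := by
    obtain ⟨T, hT⟩ := exists_tree Finset.univ f (fun x y h => by
      congr 1; funext i; exact h i (Finset.mem_univ i))
    exact ⟨Finset.univ.sup T.cost, T, fun x _ => hT x,
      fun x _ => Finset.le_sup (f := T.cost) (Finset.mem_univ x)⟩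
  obtain ⟨T, h1, h2⟩ := Nat.sInf_mem hne
  exact ⟨T, h1, fun x hx => (h2 x hx).trans h⟩

lemma card_slice (n j : ℕ) : ∃ S : Finset (Fin n → Bool),
    (∀ x, x ∈ S → x ∈ cubeSlice (Fin n) j) ∧ S.card = n.choose j := by
  classical
  refine ⟨(Finset.powersetCard j Finset.univ).image (fun s => fun i => decide (i ∈ s)), ?_, ?_⟩
  · intro x hx
    obtain ⟨s, hs, rfl⟩ := Finset.mem_image.1 hx
    simpa [cubeSlice, hamWeight] using hs
  · rw [Finset.card_image_of_injective, Finset.card_powersetCard]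
    · simp
    · intro s t h
      ext i
      have := congrFun h i
      simpa using this

lemma mid_step (m : ℕ) (hm : 2 ≤ m) :
    3 * m.choose (m / 2) ≤ 2 * (m + 1).choose ((m + 1) / 2) := by
  rcases Nat.even_or_odd' m with ⟨j, rfl | rfl⟩
  · have e1 : 2 * j / 2 = j := by omega
    have e2 : (2 * j + 1) / 2 = j := by omega
    rw [e1, e2]
    have := Nat.add_one_mul_choose_eq (2 * j) j
    have hs : (2 * j + 1).choose (j + 1) = (2 * j + 1).choose j := by
      apply Nat.choose_symm_of_eq_add; omega
    rw [hs] at this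
    have hj : 0 < j + 1 := by omega
    refine Nat.le_of_mul_le_mul_right ?_ hj
    rw [mul_assoc 2, ← this]
    nlinarith [Nat.zero_le ((2 * j).choose j)]
  · have e1 : (2 * j + 1) / 2 = j := by omega
    have e2 : (2 * j + 1 + 1) / 2 = j + 1 := by omega
    rw [e1, e2, Nat.choose_succ_succ]
    have hs : (2 * j + 1).choose (j + 1) = (2 * j + 1).choose j := by
      apply Nat.choose_symm_of_eq_add; omega
    simp only [Nat.succ_eq_add_one]
    omega

lemma mid_pow (d k : ℕ) (hd : 2 ≤ d) :
    3 ^ k * d.choose (d / 2) ≤ 2 ^ k * (d + k).choose ((d + k) / 2) := by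
  induction k with
  | zero => simp
  | succ k ih =>
    have := mid_step (d + k) (by omega)
    rw [← add_assoc, pow_succ, pow_succ]
    calc _ = 3 * (3 ^ k * d.choose (d / 2)) := by ring
      _ ≤ 3 * (2 ^ k * (d + k).choose ((d + k) / 2)) := Nat.mul_le_mul_left _ ih
      _ = 2 ^ k * (3 * (d + k).choose ((d + k) / 2)) := by ring
      _ ≤ 2 ^ k * (2 * (d + k + 1).choose ((d + k + 1) / 2)) := Nat.mul_le_mul_left _ this
      _ = _ := by ring

lemma main_count (d k L : ℕ) (hd : 2 ≤ d) (hL : d + k ≤ 2 ^ L)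
    (h : ∀ f : (Fin (d + k) → Bool) → Bool,
      Dquery (cubeSlice (Fin (d + k)) ((d + k) / 2)) f ≤ d) :
    3 ^ k ≤ 2 ^ k * (L * (2 * (k + 1))) := by
  classical
  obtain ⟨S, hS, hc⟩ := card_slice (d + k) ((d + k) / 2)
  have hsl : cubeSlice (Fin (d + k)) ((d + k) / 2) =
      sub Finset.univ (fun _ => false) ((d + k) / 2) := by
    ext x; simp [cubeSlice, hamWeight, sub]
  have h1 : 2 ^ S.card ≤ (Fam (cubeSlice (Fin (d + k)) ((d + k) / 2)) d).card := by
    rw [← Finset.card_powerset]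
    apply Finset.card_le_card_of_injOn (fun s => fun x => decide (x ∈ s))
    · intro s hs
      have hs' : s ⊆ S := by simpa using hs
      rw [Finset.mem_coe, mem_Fam]
      refine ⟨fun x hx => ?_, Dquery_attained _ _ _ (h _)⟩
      simp only [decide_eq_false_iff_not]
      exact fun hxs => hx (hS x (hs' hxs))
    · intro s _ t _ hst
      ext i
      have := congrFun hst i
      simpa using this
  have h2 := count (n := d + k) (by omega) k d Finset.univ (fun _ => false) ((d + k) / 2)
    (by simp) (by omega)
  rw [← hsl] at h2
  have h3 : 2 ^ S.card ≤ 2 ^ (L * (2 * P k d ((d + k) / 2))) := by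
    calc _ ≤ _ := h1
      _ ≤ (d + k) * _ := Nat.le_mul_of_pos_left _ (by omega)
      _ ≤ _ := h2
      _ ≤ (2 ^ L) ^ (2 * P k d ((d + k) / 2)) := Nat.pow_le_pow_left hL _
      _ = _ := by rw [← pow_mul]
  have h4 : S.card ≤ L * (2 * P k d ((d + k) / 2)) :=
    (Nat.pow_le_pow_iff_right (by norm_num)).1 h3
  rw [hc] at h4
  have h5 := P_le k d ((d + k) / 2)
  have h6 := mid_pow d k hd
  have hp : 0 < d.choose (d / 2) := Nat.choose_pos (by omega)
  refine Nat.le_of_mul_le_mul_right ?_ hp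
  calc _ ≤ _ := h6
    _ ≤ 2 ^ k * (L * (2 * ((k + 1) * d.choose (d / 2)))) := by
      apply Nat.mul_le_mul_left
      exact h4.trans (Nat.mul_le_mul_left _ (Nat.mul_le_mul_left _ h5))
    _ = _ := by ring

lemma arith1 (m : ℕ) (hm : 3 ≤ m) :
    2 ^ (8 * m) * (2 ^ (m + 1) * (2 * (8 * m + 1))) < 3 ^ (8 * m) := by
  have h1 : 4 * (8 * m + 1) < 12 ^ m := by
    induction m, hm using Nat.le_induction with
    | base => norm_num
    | succ m hm ih => rw [pow_succ]; omega
  calc _ = (2 ^ 9) ^ m * (4 * (8 * m + 1)) := by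
        rw [← Nat.pow_mul, show 9 * m = 8 * m + m by ring, pow_add, pow_succ]; ring
    _ < (2 ^ 9) ^ m * 12 ^ m := Nat.mul_lt_mul_of_pos_left h1 (by positivity)
    _ = (2 ^ 9 * 12) ^ m := by rw [mul_pow]
    _ ≤ (3 ^ 8) ^ m := Nat.pow_le_pow_left (by norm_num) m
    _ = _ := by rw [pow_mul]

lemma arith2 (m : ℕ) (hm : 3 ≤ m) : 8 * m + 2 ≤ 2 ^ (2 ^ m) := by
  have h1 : 8 * m + 2 ≤ 4 ^ m := by
    induction m, hm using Nat.le_induction with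
    | base => norm_num
    | succ m hm ih => rw [pow_succ]; omega
  have h2 : 2 * m ≤ 2 ^ m := by
    clear h1
    induction m, hm using Nat.le_induction with
    | base => norm_num
    | succ m hm ih => rw [pow_succ]; omega
  calc _ ≤ _ := h1
    _ = 2 ^ (2 * m) := by rw [pow_mul]; norm_num
    _ ≤ _ := Nat.pow_le_pow_right (by norm_num) h2

end SliceAux

/-- There is a constant `c > 0` such that for all sufficiently large even `n`, some Boolean
function on the balanced slice of `{0,1}^n` has deterministic query complexity at least
`n - c·log log n`. -/
theorem stmt8 : ∃ c : ℝ, 0 < c ∧ ∃ N : ℕ, ∀ n : ℕ, N ≤ n → Even n →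
    ∃ f : (Fin n → Bool) → Bool,
      (n : ℝ) - c * Real.logb 2 (Real.logb 2 n) ≤
        (Dquery (cubeSlice (Fin n) (n / 2)) f : ℝ) := by
  refine ⟨8, by norm_num, 256, fun n hn _ => ?_⟩
  set l := Nat.log 2 n with hl
  set m := Nat.log 2 l with hm
  have hl8 : 8 ≤ l := (Nat.le_log_iff_pow_le (by norm_num) (by omega)).2 (by simpa using hn)
  have hm3 : 3 ≤ m := (Nat.le_log_iff_pow_le (by norm_num) (by omega)).2 (by simpa using hl8)
  have h1 : 2 ^ m ≤ l := Nat.pow_log_le_self 2 (by omega)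
  have h2 : 2 ^ l ≤ n := Nat.pow_log_le_self 2 (by omega)
  have h3 : l < 2 ^ (m + 1) := Nat.lt_pow_succ_log_self (by norm_num) l
  have h4 : n < 2 ^ (l + 1) := Nat.lt_pow_succ_log_self (by norm_num) n
  have h5 : n ≤ 2 ^ (2 ^ (m + 1)) :=
    h4.le.trans (Nat.pow_le_pow_right (by norm_num) h3)
  have h6 : 2 ^ (2 ^ m) ≤ n := (Nat.pow_le_pow_right (by norm_num) h1).trans h2
  have h7 := (SliceAux.arith2 m hm3).trans h6
  obtain ⟨d, hd⟩ : ∃ d, n = d + 8 * m := ⟨n - 8 * m, by omega⟩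
  have hex : ∃ f : (Fin n → Bool) → Bool, d < Dquery (cubeSlice (Fin n) (n / 2)) f := by
    by_contra hcon
    push Not at hcon
    clear_value l m
    subst hd
    have := SliceAux.main_count d (8 * m) (2 ^ (m + 1)) (by omega) h5 hcon
    have := SliceAux.arith1 m hm3
    omega
  obtain ⟨f, hf⟩ := hex
  refine ⟨f, ?_⟩
  have hr : (m : ℝ) ≤ Real.logb 2 (Real.logb 2 n) := by
    have e1 : (l : ℝ) ≤ Real.logb 2 n := by
      rw [Real.le_logb_iff_rpow_le (by norm_num) (by exact_mod_cast (by omega : 0 < n))]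
      rw [Real.rpow_natCast]
      exact_mod_cast h2
    have e0 : (0 : ℝ) < l := by exact_mod_cast (by omega : 0 < l)
    rw [Real.le_logb_iff_rpow_le (by norm_num) (e0.trans_le e1), Real.rpow_natCast]
    refine le_trans ?_ e1
    exact_mod_cast h1
  have hf' : (d : ℝ) ≤ (Dquery (cubeSlice (Fin n) (n / 2)) f : ℝ) := by exact_mod_cast hf.le
  have hd' : (n : ℝ) = d + 8 * m := by exact_mod_cast hd
  linarith
end

section
/- For every integer h ≥ 1 there exists k₀ such that for all k ≥ k₀ and every Boolean function f on the slice {x ∈ {0,1}^{2k} : |x| = k}, f has a balanced certificate of size at most 2(k − h); that is, mBC(f) ≤ 2(k − h). -/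
theorem ramsey_aux_s9 {α : Type} [DecidableEq α] (r : ℕ) : ∀ p q : ℕ, ∃ N : ℕ, ∀ S : Finset α,
    N ≤ S.card → ∀ c : Finset α → Bool,
      (∃ T ⊆ S, T.card = p ∧ ∀ U ⊆ T, U.card = r → c U = true) ∨
      (∃ T ⊆ S, T.card = q ∧ ∀ U ⊆ T, U.card = r → c U = false) := by
  induction r with
  | zero =>
    intro p q
    refine ⟨max p q, fun S hS c => ?_⟩
    cases hc : c ∅ with
    | true =>
      left
      obtain ⟨T, hT, hp⟩ := Finset.exists_subset_card_eq (le_trans (le_max_left p q) hS)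
      refine ⟨T, hT, hp, fun U _ hU => ?_⟩
      rw [Finset.card_eq_zero.mp hU, hc]
    | false =>
      right
      obtain ⟨T, hT, hp⟩ := Finset.exists_subset_card_eq (le_trans (le_max_right p q) hS)
      refine ⟨T, hT, hp, fun U _ hU => ?_⟩
      rw [Finset.card_eq_zero.mp hU, hc]
  | succ r ihr =>
    have ext : ∀ (c : Finset α → Bool) (b : Bool) (a : α) (T T' : Finset α), T' ⊆ T →
        (∀ U ⊆ T, U.card = r → c (insert a U) = b) →
        (∀ U ⊆ T', U.card = r + 1 → c U = b) →
        ∀ U ⊆ insert a T', U.card = r + 1 → c U = b := by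
      intro c b a T T' hTT h1 h2 U hU hc
      by_cases ha : a ∈ U
      · have := h1 (U.erase a)
          (fun x hx => hTT (by
            have := hU (Finset.mem_of_mem_erase hx)
            exact (Finset.mem_insert.mp this).resolve_left (Finset.ne_of_mem_erase hx)))
          (by rw [Finset.card_erase_of_mem ha, hc]; rfl)
        rwa [Finset.insert_erase ha] at this
      · exact h2 U (fun x hx => (Finset.mem_insert.mp (hU hx)).resolve_left
          (fun h => ha (h ▸ hx))) hc
    intro p
    induction p with
    | zero =>
      intro q
      refine ⟨0, fun S _ c => Or.inl ⟨∅, by simp, rfl, fun U hU h => ?_⟩⟩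
      rw [Finset.subset_empty.mp hU] at h
      simp at h
    | succ p ihp =>
      intro q
      induction q with
      | zero =>
        refine ⟨0, fun S _ c => Or.inr ⟨∅, by simp, rfl, fun U hU h => ?_⟩⟩
        rw [Finset.subset_empty.mp hU] at h
        simp at h
      | succ q ihq =>
        obtain ⟨N1, h1⟩ := ihp (q + 1)
        obtain ⟨N2, h2⟩ := ihq
        obtain ⟨M, hM⟩ := ihr N1 N2
        refine ⟨M + 1, fun S hS c => ?_⟩
        obtain ⟨a, ha⟩ : S.Nonempty := Finset.card_pos.mp (by omega)
        have hsub : ∀ T, T ⊆ S.erase a → T ⊆ S :=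
          fun T hT => hT.trans (Finset.erase_subset a S)
        have hins : ∀ T, T ⊆ S.erase a → insert a T ⊆ S :=
          fun T hT => Finset.insert_subset ha (hsub T hT)
        have hcard : ∀ T, T ⊆ S.erase a → (insert a T).card = T.card + 1 :=
          fun T hT => Finset.card_insert_of_notMem
            (fun h => Finset.notMem_erase a S (hT h))
        rcases hM (S.erase a) (by rw [Finset.card_erase_of_mem ha]; omega)
          (fun U => c (insert a U)) with ⟨T, hT, hTc, hc⟩ | ⟨T, hT, hTc, hc⟩
        · rcases h1 T hTc.ge c with ⟨T', hT', hTc', hc'⟩ | ⟨T', hT', hTc', hc'⟩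
          · exact Or.inl ⟨insert a T', hins _ (hT'.trans hT),
              by rw [hcard _ (hT'.trans hT), hTc'], ext c true a T T' hT' hc hc'⟩
          · exact Or.inr ⟨T', hsub _ (hT'.trans hT), hTc', hc'⟩
        · rcases h2 T hTc.ge c with ⟨T', hT', hTc', hc'⟩ | ⟨T', hT', hTc', hc'⟩
          · exact Or.inl ⟨T', hsub _ (hT'.trans hT), hTc', hc'⟩
          · exact Or.inr ⟨insert a T', hins _ (hT'.trans hT),
              by rw [hcard _ (hT'.trans hT), hTc'], ext c false a T T' hT' hc hc'⟩

theorem ramsey_fin (r m : ℕ) : ∃ N : ℕ, ∀ (n : ℕ) (S : Finset (Fin n)),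
    N ≤ S.card → ∀ c : Finset (Fin n) → Bool,
      ∃ b, ∃ T ⊆ S, T.card = m ∧ ∀ U ⊆ T, U.card = r → c U = b := by
  obtain ⟨N, hN⟩ := ramsey_aux_s9 (α := ℕ) r m m
  refine ⟨N, fun n S hS c => ?_⟩
  have key : ∃ b, ∃ T ⊆ S.map Fin.valEmbedding, T.card = m ∧ ∀ U ⊆ T, U.card = r →
      c (Finset.univ.filter fun i : Fin n => (i : ℕ) ∈ U) = b := by
    rcases hN (S.map Fin.valEmbedding) (by simpa using hS)
      (fun U => c (Finset.univ.filter fun i : Fin n => (i : ℕ) ∈ U)) with h | h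
    · exact ⟨true, h⟩
    · exact ⟨false, h⟩
  obtain ⟨b, T, hT, hm, hc⟩ := key
  obtain ⟨T', hT', rfl⟩ := Finset.subset_map_iff.mp hT
  refine ⟨b, T', hT', by simpa using hm, fun U hU hr => ?_⟩
  have := hc (U.map Fin.valEmbedding) (Finset.map_subset_map.mpr hU) (by simpa using hr)
  convert this using 2
  ext i
  simp [Fin.val_inj]

/-- For every `h ≥ 1` there exists `k₀` such that for all `k ≥ k₀`, every Boolean function
on the balanced slice of `{0,1}^{2k}` has a balanced certificate of size at most `2(k-h)`;
that is, `mBC(f) ≤ 2(k - h)`. -/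
theorem stmt9 (h : ℕ) (hh : 1 ≤ h) :
    ∃ k₀ : ℕ, ∀ k : ℕ, k₀ ≤ k → ∀ f : (Fin (2 * k) → Bool) → Bool,
      mBC (cubeSlice (Fin (2 * k)) k) f ≤ 2 * (k - h) := by
  obtain ⟨N, hN⟩ := ramsey_fin h (2 * h)
  refine ⟨N + h, fun k hk f => ?_⟩
  obtain ⟨A, -, hA⟩ := Finset.exists_subset_card_eq
    (s := (Finset.univ : Finset (Fin (2 * k)))) (n := k - h) (by simp; omega)
  have hAc : (Aᶜ).card = k + h := by
    rw [Finset.card_compl, hA, Fintype.card_fin]; omega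
  obtain ⟨b, T, hTA, hT, hmono⟩ := hN (2 * k) Aᶜ (by omega)
    (fun U => f (fun i => decide (i ∈ A ∪ U)))
  have hdis : Disjoint A T := by
    rw [Finset.disjoint_left]
    intro a ha hb
    exact Finset.mem_compl.mp (hTA hb) ha
  obtain ⟨U, hUT, hU⟩ := Finset.exists_subset_card_eq (s := T) (n := h) (by omega)
  have hfU := hmono U hUT hU
  have hAT : (A ∪ T).card = k + h := by
    rw [Finset.card_union_of_disjoint hdis, hA, hT]; omega
  let x : Fin (2 * k) → Bool := fun i => decide (i ∈ A ∪ U)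
  let C : Fin (2 * k) → Option Bool := fun i =>
    if i ∈ A then some true else if i ∈ T then none else some false
  have hx : x ∈ cubeSlice (Fin (2 * k)) k := by
    have : (Finset.univ.filter fun i => x i = true) = A ∪ U := by
      ext i; simp [x]
    change (Finset.univ.filter fun i => x i = true).card = k
    rw [this, Finset.card_union_of_disjoint (hdis.mono_right hUT), hA, hU]; omega
  have hC1 : (Finset.univ.filter fun i => C i = some true) = A := by
    ext i; simp only [C, Finset.mem_filter, Finset.mem_univ, true_and]
    split_ifs <;> simp_all
  have hC0 : (Finset.univ.filter fun i => C i = some false) = (A ∪ T)ᶜ := by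
    ext i; simp only [C, Finset.mem_filter, Finset.mem_univ, true_and]
    split_ifs <;> simp_all
  have hCs : (Finset.univ.filter fun i => (C i).isSome) = Tᶜ := by
    ext i; simp only [C, Finset.mem_filter, Finset.mem_univ, true_and]
    have := fun ha : i ∈ A => Finset.disjoint_left.mp hdis ha
    split_ifs <;> simp_all
  have hBC : BC (cubeSlice (Fin (2 * k)) k) f x ≤ 2 * (k - h) := by
    apply Nat.sInf_le
    refine ⟨C, ?_, ?_, ?_, ?_⟩
    · unfold BalancedCert
      rw [hC1, hC0, Finset.card_compl, hAT, hA, Fintype.card_fin]; omega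
    · intro i b' hi
      have := @hUT i
      simp only [C] at hi
      simp only [x]
      split_ifs at hi <;> simp_all
    · intro y hy hcons
      have hV : (Finset.univ.filter fun i => y i = true) = A ∪ (T.filter fun i => y i = true) := by
        ext i
        have := hcons i
        simp only [C] at this
        simp only [Finset.mem_filter, Finset.mem_univ, true_and, Finset.mem_union]
        split_ifs at this <;> simp_all
      have hyc : (Finset.univ.filter fun i => y i = true).card = k := hy
      have hVT : (T.filter fun i => y i = true) ⊆ T := Finset.filter_subset _ _
      rw [hV, Finset.card_union_of_disjoint (hdis.mono_right hVT), hA] at hyc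
      have h1 := hmono _ hVT (by omega)
      have h2 : (fun i => decide (i ∈ A ∪ T.filter fun i => y i = true)) = y := by
        rw [← hV]; funext i; simp
      simp only [h2] at h1
      exact h1.trans hfU.symm
    · unfold certSize
      rw [hCs, Finset.card_compl, hT, Fintype.card_fin]; omega
  exact le_trans (Nat.sInf_le ⟨x, hx, rfl⟩) hBC
end

section
/- Identify the ground set of the Johnson graph J(n,k) with ℤ_n. For each i ∈ ℤ_n, the set I_i = {S ⊆ ℤ_n : |S| = k and Σ_{x∈S} x = i} is an independent set in J(n,k). -/
/-- With the ground set of the Johnson graph `J(n,k)` identified with `ℤ_n`, each set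
`I_i = {S : |S| = k, Σ_{x ∈ S} x = i}` is an independent set in `J(n,k)`: no two of its
members have symmetric difference of size exactly `2`. -/
theorem stmt11 (n k : ℕ) (hn : 1 ≤ n) (i : ZMod n)
    (S T : Finset (ZMod n)) (hS : S.card = k) (hT : T.card = k)
    (hSsum : (∑ x ∈ S, x) = i) (hTsum : (∑ x ∈ T, x) = i) :
    (symmDiff S T).card ≠ 2 := by
  intro h
  have hd : Disjoint (S \ T) (T \ S) := disjoint_sdiff_sdiff
  have h2 : (S \ T).card + (T \ S).card = 2 := by
    rw [← Finset.card_union_of_disjoint hd]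
    exact h
  have h3 := Finset.card_sdiff_add_card_inter S T
  have h4 := Finset.card_sdiff_add_card_inter T S
  rw [Finset.inter_comm] at h4
  obtain ⟨a, ha⟩ := Finset.card_eq_one.mp (show (S \ T).card = 1 by omega)
  obtain ⟨b, hb⟩ := Finset.card_eq_one.mp (show (T \ S).card = 1 by omega)
  have h5 := Finset.sum_inter_add_sum_sdiff S T (fun x => x)
  have h6 := Finset.sum_inter_add_sum_sdiff T S (fun x => x)
  rw [Finset.inter_comm] at h6
  rw [ha, Finset.sum_singleton, hSsum] at h5
  rw [hb, Finset.sum_singleton, hTsum] at h6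
  have hab : a = b := add_left_cancel (h5.trans h6.symm)
  rw [ha, hb, hab] at hd
  simp at hd
end

section
/- For all n ≥ 1 and 0 ≤ k ≤ n, the Johnson graph J(n,k) contains an independent set of size at least (1/n)·C(n,k), where C(n,k) is the binomial coefficient. -/
/-- For all `n ≥ 1` and `0 ≤ k ≤ n`, the Johnson graph `J(n,k)` contains an independent
set of size at least `(1/n)·C(n,k)`: a family of `k`-element subsets of `[n]`, no two of
which have symmetric difference of size exactly `2`. -/
theorem stmt12 (n k : ℕ) (hn : 1 ≤ n) (hk : k ≤ n) :
    ∃ I : Finset (Finset (Fin n)),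
      (∀ S ∈ I, S.card = k) ∧
      (∀ S ∈ I, ∀ T ∈ I, (symmDiff S T).card ≠ 2) ∧
      (Nat.choose n k : ℝ) / n ≤ I.card := by
  have hn0 : (n : ℝ) ≠ 0 := by positivity
  let f : Finset (Fin n) → ℕ := fun S => (∑ i ∈ S, i.val) % n
  obtain ⟨c, -, hc⟩ := Finset.exists_le_card_fiber_of_nsmul_le_card_of_maps_to
    (s := Finset.powersetCard k (Finset.univ : Finset (Fin n))) (t := Finset.range n) (f := f)
    (b := (Nat.choose n k : ℝ) / n)
    (fun S _ => Finset.mem_range.2 (Nat.mod_lt _ hn))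
    ⟨0, Finset.mem_range.2 hn⟩
    (by
      rw [Finset.card_powersetCard, Finset.card_range, Finset.card_univ, Fintype.card_fin,
        nsmul_eq_mul, mul_div_cancel₀ _ hn0])
  refine ⟨_, ?_, ?_, hc⟩
  · intro S hS
    exact (Finset.mem_powersetCard.1 (Finset.mem_filter.1 hS).1).2
  · intro S hS T hT h2
    obtain ⟨hS1, hS2⟩ := Finset.mem_filter.1 hS
    obtain ⟨hT1, hT2⟩ := Finset.mem_filter.1 hT
    have hS3 := (Finset.mem_powersetCard.1 hS1).2
    have hT3 := (Finset.mem_powersetCard.1 hT1).2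
    have hd : (symmDiff S T).card = (S \ T).card + (T \ S).card :=
      Finset.card_union_of_disjoint disjoint_sdiff_sdiff
    have e1 := Finset.card_sdiff_add_card_inter S T
    have e2 := Finset.card_sdiff_add_card_inter T S
    rw [Finset.inter_comm] at e2
    obtain ⟨a, ha⟩ := Finset.card_eq_one.1 (show (S \ T).card = 1 by omega)
    obtain ⟨b, hb⟩ := Finset.card_eq_one.1 (show (T \ S).card = 1 by omega)
    have s1 := Finset.sum_inter_add_sum_sdiff S T (fun i : Fin n => i.val)
    have s2 := Finset.sum_inter_add_sum_sdiff T S (fun i : Fin n => i.val)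
    rw [Finset.inter_comm] at s2
    rw [ha, Finset.sum_singleton] at s1
    rw [hb, Finset.sum_singleton] at s2
    have hm : (∑ i ∈ S, i.val) ≡ (∑ i ∈ T, i.val) [MOD n] := hS2.trans hT2.symm
    rw [← s1, ← s2] at hm
    have hab : a.val ≡ b.val [MOD n] := Nat.ModEq.add_left_cancel' _ hm
    have hab' : a = b := Fin.ext (Nat.ModEq.eq_of_lt_of_lt hab a.2 b.2)
    have m1 : a ∈ S \ T := by simp [ha]
    have m2 : b ∈ T \ S := by simp [hb]
    rw [← hab'] at m2
    exact (Finset.mem_sdiff.1 m1).2 (Finset.mem_sdiff.1 m2).1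
end

section
/- Let l ≥ 1, k = 2^l, and let ED be the element distinctness function on the balanced slice of {0,1}^{kl}: ED(x₁, …, x_k) = 1 if and only if the blocks x₁, …, x_k ∈ {0,1}^l are pairwise distinct. Then every 1-subcube of ED (that is, every subcube all of whose members lying in the balanced slice are 1-inputs of ED) contains at most two 1-inputs of ED. -/
/-- The element distinctness function on `{0,1}^{kl}` with `k = 2^l`: the input is split
into `k` blocks of `l` bits (coordinates indexed by `Fin k × Fin l`), and the output is `1`
iff the blocks are pairwise distinct. -/
def ED (l : ℕ) (x : (Fin (2 ^ l) × Fin l) → Bool) : Bool :=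
  decide (Function.Injective fun i : Fin (2 ^ l) => fun j : Fin l => x (i, j))

theorem ed_inj {l : ℕ} {x : (Fin (2 ^ l) × Fin l) → Bool} (h : ED l x = true) :
    Function.Injective fun i : Fin (2 ^ l) => fun j : Fin l => x (i, j) := by
  simpa [ED] using h

theorem ed_surj {l : ℕ} {x : (Fin (2 ^ l) × Fin l) → Bool} (h : ED l x = true)
    (v : Fin l → Bool) : ∃ i, ∀ j, x (i, j) = v j := by
  have hb := (Fintype.bijective_iff_injective_and_card _).2 ⟨ed_inj h, by simp⟩
  obtain ⟨i, hi⟩ := hb.2 v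
  exact ⟨i, fun j => congrFun hi j⟩

theorem hamWeight_swap {ι : Type} [Fintype ι] [DecidableEq ι] (x : ι → Bool) (p q : ι) :
    hamWeight (fun r => x (Equiv.swap p q r)) = hamWeight x := by
  unfold hamWeight
  exact Finset.card_equiv (Equiv.swap p q) (by simp)

theorem swap_rows {l : ℕ} {C : (Fin (2 ^ l) × Fin l) → Option Bool} {n : ℕ}
    (hC : ∀ x ∈ cubeSlice (Fin (2 ^ l) × Fin l) n, ConsistentWith C x → ED l x = true)
    {x : (Fin (2 ^ l) × Fin l) → Bool} (hx : x ∈ cubeSlice (Fin (2 ^ l) × Fin l) n)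
    (hc : ConsistentWith C x) {p q : Fin (2 ^ l) × Fin l} (hp : C p = none) (hq : C q = none)
    (xp : x p = true) (xq : x q = false) :
    p.2 = q.2 ∧ (∀ j, x (p.1, j) = if j = q.2 then true else x (q.1, j)) ∧
      (∀ j, x (q.1, j) = if j = p.2 then false else x (p.1, j)) := by
  have hex := hC x hx hc
  obtain ⟨y, hy⟩ : ∃ y, y = fun r => x (Equiv.swap p q r) := ⟨_, rfl⟩
  have yp : y p = false := by simp [hy, xq]
  have yq : y q = true := by simp [hy, xp]
  have yr : ∀ r, r ≠ p → r ≠ q → y r = x r := by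
    intro r h1 h2
    simp [hy, Equiv.swap_apply_of_ne_of_ne h1 h2]
  have hey : ED l y = true := by
    apply hC
    · have := hamWeight_swap x p q
      rw [hy]
      exact this.trans hx
    · intro r b hb
      rw [yr r (by rintro rfl; simp [hp] at hb) (by rintro rfl; simp [hq] at hb)]
      exact hc r b hb
  have inj : ∀ i i', (∀ j, x (i, j) = x (i', j)) → i = i' :=
    fun i i' h => ed_inj hex (funext h)
  obtain ⟨a, b⟩ := p
  obtain ⟨c, d⟩ := q
  have A : ∀ j, x (a, j) = if j = d then true else x (c, j) := by
    obtain ⟨i, hi⟩ := ed_surj hey (fun j => x (a, j))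
    have h1 : i ≠ a := by
      rintro rfl
      have h := (yp.symm.trans (hi b)).trans xp
      cases h
    have h2 : i = c := by
      by_contra h2
      exact h1 (inj _ _ fun j => by rw [← hi j, yr _ (by simp [h1]) (by simp [h2])])
    subst h2
    intro j
    rw [← hi j]
    split_ifs with h
    · rw [h, yq]
    · exact yr _ (by simp [h1]) (by simp [h])
  have B : ∀ j, x (c, j) = if j = b then false else x (a, j) := by
    obtain ⟨i, hi⟩ := ed_surj hey (fun j => x (c, j))
    have h1 : i ≠ c := by
      rintro rfl
      have h := (yq.symm.trans (hi d)).trans xq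
      cases h
    have h2 : i = a := by
      by_contra h2
      exact h1 (inj _ _ fun j => by rw [← hi j, yr _ (by simp [h2]) (by simp [h1])])
    subst h2
    intro j
    rw [← hi j]
    split_ifs with h
    · rw [h, yp]
    · exact yr _ (by simp [h]) (by simp [h1])
  refine ⟨?_, A, B⟩
  by_contra h
  have h1 := A b
  have h2 := B b
  rw [if_neg h, xp] at h1
  rw [if_pos rfl, ← h1] at h2
  cases h2

theorem ham_exists_ne {ι : Type} [Fintype ι] {x y : ι → Bool} (h : hamWeight x = hamWeight y)
    (hne : x ≠ y) : ∃ p, x p = true ∧ y p = false := by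
  by_contra hcon
  push Not at hcon
  have hs : (Finset.univ.filter fun i => x i = true) ⊆ Finset.univ.filter fun i => y i = true := by
    intro i
    simpa using hcon i
  have he := Finset.eq_of_subset_of_card_le hs h.ge
  apply hne
  funext i
  have := Finset.ext_iff.1 he i
  simp only [Finset.mem_filter, Finset.mem_univ, true_and] at this
  exact Bool.eq_iff_iff.2 this

theorem differs_iff {l : ℕ} {C : (Fin (2 ^ l) × Fin l) → Option Bool} {n : ℕ}
    (hC : ∀ x ∈ cubeSlice (Fin (2 ^ l) × Fin l) n, ConsistentWith C x → ED l x = true)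
    {x y : (Fin (2 ^ l) × Fin l) → Bool} (hx : x ∈ cubeSlice (Fin (2 ^ l) × Fin l) n)
    (hc : ConsistentWith C x) (hy : y ∈ cubeSlice (Fin (2 ^ l) × Fin l) n)
    (hcy : ConsistentWith C y) (hne : x ≠ y) (r : Fin (2 ^ l) × Fin l) :
    x r ≠ y r ↔ C r = none := by
  have key : ∀ r, x r ≠ y r → C r = none := by
    intro r h
    cases hr : C r with
    | none => rfl
    | some b => exact absurd ((hc r b hr).trans (hcy r b hr).symm) h
  refine ⟨key r, fun hr => ?_⟩
  have hw : hamWeight x = hamWeight y := Eq.trans hx (Eq.symm hy)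
  obtain ⟨p, p1, p2⟩ := ham_exists_ne hw hne
  obtain ⟨q, q1, q2⟩ := ham_exists_ne hw.symm hne.symm
  have hp := key p (by simp [p1, p2])
  have hq := key q (by simp [q1, q2])
  have hex := hC x hx hc
  have S := swap_rows hC hx hc hp hq p1 q2
  cases hxr : x r with
  | true =>
    have S' := swap_rows hC hx hc hr hq hxr q2
    have : r = p := Prod.ext (ed_inj hex (funext fun j => (S'.2.1 j).trans (S.2.1 j).symm))
      (S'.1.trans S.1.symm)
    rw [this, p2]; simp
  | false =>
    have S' := swap_rows hC hx hc hp hr p1 hxr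
    have : r = q := Prod.ext (ed_inj hex (funext fun j => (S'.2.2 j).trans (S.2.2 j).symm))
      (S'.1.symm.trans S.1)
    rw [this, q1]; simp

/-- Every 1-subcube of element distinctness on the balanced slice of `{0,1}^{kl}`
(`k = 2^l`) contains at most two 1-inputs. -/
theorem stmt15 (l : ℕ) (hl : 1 ≤ l) (C : (Fin (2 ^ l) × Fin l) → Option Bool)
    (hC : ∀ x ∈ cubeSlice (Fin (2 ^ l) × Fin l) (2 ^ l * l / 2),
      ConsistentWith C x → ED l x = true) :
    {x : (Fin (2 ^ l) × Fin l) → Bool |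
        x ∈ cubeSlice (Fin (2 ^ l) × Fin l) (2 ^ l * l / 2) ∧
          ConsistentWith C x ∧ ED l x = true}.ncard ≤ 2 := by
  by_contra hlt
  rw [not_le, Set.two_lt_ncard] at hlt
  obtain ⟨x, hx, y, hy, z, hz, hxy, hxz, hyz⟩ := hlt
  apply hyz
  funext r
  have h1 := differs_iff hC hx.1 hx.2.1 hy.1 hy.2.1 hxy r
  have h2 := differs_iff hC hx.1 hx.2.1 hz.1 hz.2.1 hxz r
  have h3 := h1.trans h2.symm
  revert h3
  cases x r <;> cases y r <;> cases z r <;> simp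
end
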